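/- arXiv:1612.07017 — 2 statements merged into one kernel-verified Lean document; each statement's English description precedes it below -/
import Mathlib

section
/- Let T > 0 and let V : ℝⁿ → ℝⁿ be Lipschitz continuous, V ∈ C⁵(ℝⁿ,ℝⁿ), with derivatives of order 5 locally Lipschitz with polynomially growing Lipschitz constants. Then there exists a continuous function h_V : ℝⁿ → ℝⁿ with polynomial growth such that for every p ≥ 1 there exist C > 0 and q ∈ ℕ* with: for all (θ,x) ∈ [0,T]×ℝⁿ, E[‖exp(G_θ V)x − Ψ₄^V(G_θ,x) − h_V(x)G_θ⁵‖^{2p}] ≤ C(1 + ‖x‖^{2q})θ^{6p}, where G_θ is a centered real Gaussian random variable with variance θ. -/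
open MeasureTheory ProbabilityTheory

noncomputable section

/-- Euclidean space ℝⁿ. -/
abbrev Vec (n : ℕ) : Type := EuclideanSpace ℝ (Fin n)

/-- Classical fourth-order Runge–Kutta map `Ψ₄^V`. -/
def rk4 {n : ℕ} (V : Vec n → Vec n) (θ : ℝ) (x : Vec n) : Vec n :=
  x + (θ / 6) • (V x + (2 : ℝ) • V (x + (θ / 2) • V x)
    + (2 : ℝ) • V (x + (θ / 2) • V (x + (θ / 2) • V x))
    + V (x + θ • V (x + (θ / 2) • V (x + (θ / 2) • V x))))

/-- `φ` is the flow of the vector field `V` : `φ θ x = exp(θV)x`. -/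
def IsFlow {n : ℕ} (V : Vec n → Vec n) (φ : ℝ → Vec n → Vec n) : Prop :=
  (∀ x, φ 0 x = x) ∧ ∀ (x : Vec n) (t : ℝ), HasDerivAt (fun s => φ s x) (V (φ t x)) t

/-- `D` is locally Lipschitz with polynomially growing Lipschitz constant. -/
def PolyLocLip {E F : Type*} [NormedAddCommGroup E] [NormedAddCommGroup F]
    (D : E → F) : Prop :=
  ∃ K : ℝ, 0 ≤ K ∧ ∃ r : ℕ, ∀ x y, ‖D x - D y‖ ≤ K * (1 + ‖x‖ ^ r + ‖y‖ ^ r) * ‖x - y‖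

section helpers
set_option linter.unusedSectionVars false
set_option synthInstance.maxHeartbeats 400000
set_option maxSynthPendingDepth 8
set_option maxHeartbeats 1000000

variable {E F G : Type*} [NormedAddCommGroup E] [NormedSpace ℝ E]
  [NormedAddCommGroup F] [NormedSpace ℝ F] [NormedAddCommGroup G] [NormedSpace ℝ G]

/-- the weight -/
def wt (θ : ℝ) (x : E) : ℝ := Real.exp |θ| * (1 + ‖x‖)

lemma one_le_wt (θ : ℝ) (x : E) : 1 ≤ wt θ x := by
  unfold wt
  have h1 : 1 ≤ Real.exp |θ| := Real.one_le_exp (abs_nonneg _)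
  have h2 := norm_nonneg x
  nlinarith

lemma abs_le_wt (θ : ℝ) (x : E) : |θ| ≤ wt θ x := by
  unfold wt
  have h1 := Real.add_one_le_exp |θ|
  have h2 := norm_nonneg x
  have h3 := abs_nonneg θ
  nlinarith

lemma norm_le_wt (θ : ℝ) (x : E) : ‖x‖ ≤ wt θ x := by
  unfold wt
  have h1 : 1 ≤ Real.exp |θ| := Real.one_le_exp (abs_nonneg _)
  have h2 := norm_nonneg x
  nlinarith

/-- order-`k` smallness with polynomial/exponential weights -/
def BO (k : ℕ) (f : ℝ → E → F) : Prop :=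
  ∃ C : ℝ, 0 ≤ C ∧ ∃ r : ℕ, ∀ θ x, ‖f θ x‖ ≤ C * |θ| ^ k * wt θ x ^ r

/-- polynomial growth -/
def PG (f : E → F) : Prop :=
  ∃ C : ℝ, 0 ≤ C ∧ ∃ r : ℕ, ∀ x, ‖f x‖ ≤ C * (1 + ‖x‖) ^ r

lemma BO.le {k : ℕ} {f : ℝ → E → F} {g : ℝ → E → G} (hg : BO k g)
    (h : ∀ θ x, ‖f θ x‖ ≤ ‖g θ x‖) : BO k f := by
  obtain ⟨C, hC, r, H⟩ := hg
  exact ⟨C, hC, r, fun θ x => (h θ x).trans (H θ x)⟩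

lemma BO.add {k : ℕ} {f g : ℝ → E → F} (hf : BO k f) (hg : BO k g) :
    BO k (fun θ x => f θ x + g θ x) := by
  obtain ⟨C, hC, r, H⟩ := hf
  obtain ⟨C', hC', r', H'⟩ := hg
  refine ⟨C + C', by positivity, r + r', fun θ x => ?_⟩
  have h1 := one_le_wt θ x
  have a1 : wt θ x ^ r ≤ wt θ x ^ (r + r') := pow_le_pow_right₀ h1 (by omega)
  have a2 : wt θ x ^ r' ≤ wt θ x ^ (r + r') := pow_le_pow_right₀ h1 (by omega)
  calc _ ≤ ‖f θ x‖ + ‖g θ x‖ := norm_add_le _ _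
    _ ≤ C * |θ| ^ k * wt θ x ^ r + C' * |θ| ^ k * wt θ x ^ r' := add_le_add (H _ _) (H' _ _)
    _ ≤ C * |θ| ^ k * wt θ x ^ (r + r') + C' * |θ| ^ k * wt θ x ^ (r + r') := by gcongr
    _ = _ := by ring

lemma BO.mul {j k : ℕ} {f g : ℝ → E → ℝ} (hf : BO j f) (hg : BO k g) :
    BO (j + k) (fun θ x => f θ x * g θ x) := by
  obtain ⟨C, hC, r, H⟩ := hf
  obtain ⟨C', hC', r', H'⟩ := hg
  refine ⟨C * C', by positivity, r + r', fun θ x => ?_⟩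
  have h1 := one_le_wt θ x
  calc _ = ‖f θ x‖ * ‖g θ x‖ := norm_mul _ _
    _ ≤ (C * |θ| ^ j * wt θ x ^ r) * (C' * |θ| ^ k * wt θ x ^ r') :=
        mul_le_mul (H _ _) (H' _ _) (norm_nonneg _) (by positivity)
    _ = _ := by ring

lemma BO.norm {k : ℕ} {f : ℝ → E → F} (hf : BO k f) : BO k (fun θ x => ‖f θ x‖) :=
  hf.le (fun θ x => by simp)

lemma BO.app {f : ℝ → E → F →L[ℝ] G} {g : ℝ → E → F} (hf : BO 0 f) (hg : BO 0 g) :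
    BO 0 (fun θ x => f θ x (g θ x)) :=
  (hf.norm.mul hg.norm).le (fun θ x => by
    simpa using (f θ x).le_opNorm (g θ x))

lemma BO.pow {f : ℝ → E → ℝ} (hf : BO 0 f) (m : ℕ) : BO 0 (fun θ x => f θ x ^ m) := by
  induction m with
  | zero => exact ⟨1, by norm_num, 0, fun θ x => by simp⟩
  | succ m ih => simpa [pow_succ] using ih.mul hf

lemma BO.pow_smul (k : ℕ) {f : ℝ → E → F} (hf : BO 0 f) : BO k (fun θ x => θ ^ k • f θ x) := by
  obtain ⟨C, hC, r, H⟩ := hf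
  refine ⟨C, hC, r, fun θ x => ?_⟩
  rw [norm_smul, norm_pow, Real.norm_eq_abs]
  calc _ ≤ |θ| ^ k * (C * |θ| ^ 0 * wt θ x ^ r) := by gcongr; exact H _ _
    _ = _ := by ring

lemma BO.theta_smul {k : ℕ} {f : ℝ → E → F} (hf : BO k f) :
    BO (k + 1) (fun θ x => θ • f θ x) := by
  obtain ⟨C, hC, r, H⟩ := hf
  refine ⟨C, hC, r, fun θ x => ?_⟩
  rw [norm_smul, Real.norm_eq_abs]
  calc _ ≤ |θ| * (C * |θ| ^ k * wt θ x ^ r) := by gcongr; exact H _ _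
    _ = _ := by ring

lemma BO.smul_const {k : ℕ} {f : ℝ → E → F} (c : ℝ) (hf : BO k f) :
    BO k (fun θ x => c • f θ x) := by
  obtain ⟨C, hC, r, H⟩ := hf
  refine ⟨|c| * C, by positivity, r, fun θ x => ?_⟩
  rw [norm_smul, Real.norm_eq_abs]
  calc _ ≤ |c| * (C * |θ| ^ k * wt θ x ^ r) := by gcongr; exact H _ _
    _ = _ := by ring

lemma BO.mono {k : ℕ} {f : ℝ → E → F} (hf : BO (k + 1) f) : BO k f := by
  obtain ⟨C, hC, r, H⟩ := hf
  refine ⟨C, hC, r + 1, fun θ x => (H θ x).trans ?_⟩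
  have h1 := one_le_wt θ x
  calc C * |θ| ^ (k + 1) * wt θ x ^ r = C * |θ| ^ k * wt θ x ^ r * |θ| := by ring
    _ ≤ C * |θ| ^ k * wt θ x ^ r * wt θ x := by gcongr; exact abs_le_wt θ x
    _ = _ := by ring

lemma BO.theta_smul0 {f : ℝ → E → F} (hf : BO 0 f) : BO 0 (fun θ x => θ • f θ x) :=
  hf.theta_smul.mono

lemma BO.const (c : F) : BO 0 (fun (_ : ℝ) (_ : E) => c) :=
  ⟨‖c‖, norm_nonneg _, 0, fun θ x => by simp⟩

lemma BO.id : BO 0 (fun (_ : ℝ) (x : E) => x) :=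
  ⟨1, by norm_num, 1, fun θ x => by simpa using norm_le_wt θ x⟩

lemma PG.bo {f : E → F} (hf : PG f) : BO 0 (fun _ x => f x) := by
  obtain ⟨C, hC, r, H⟩ := hf
  refine ⟨C, hC, r, fun θ x => (H x).trans ?_⟩
  have h1 : 1 ≤ Real.exp |θ| := Real.one_le_exp (abs_nonneg _)
  have h2 := norm_nonneg x
  rw [pow_zero, mul_one]
  gcongr
  unfold wt
  nlinarith

lemma BO.pg {f : E → F} (hf : BO 0 (fun _ x => f x)) : PG f := by
  obtain ⟨C, hC, r, H⟩ := hf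
  refine ⟨C, hC, r, fun x => (H 0 x).trans ?_⟩
  simp [wt]

lemma PG.of_fderiv {f : E → F} (hd : Differentiable ℝ f) (hf : PG (fderiv ℝ f)) : PG f := by
  obtain ⟨C, hC, r, H⟩ := hf
  refine ⟨‖f 0‖ + C, by positivity, r + 1, fun x => ?_⟩
  have hx := norm_nonneg x
  have key := (convex_closedBall (0 : E) ‖x‖).norm_image_sub_le_of_norm_fderiv_le
    (f := f) (𝕜 := ℝ) (C := C * (1 + ‖x‖) ^ r) (x := 0) (y := x)
    (fun y _ => hd y) (fun y hy => (H y).trans (by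
      have : ‖y‖ ≤ ‖x‖ := by simpa using hy
      gcongr)) (by simp) (by simp)
  rw [sub_zero] at key
  have h3 : ‖f x‖ ≤ ‖f 0‖ + ‖f x - f 0‖ := by
    have := norm_add_le (f 0) (f x - f 0); simpa using this
  have h4 : (1 : ℝ) ≤ (1 + ‖x‖) ^ (r + 1) := one_le_pow₀ (by linarith)
  calc ‖f x‖ ≤ ‖f 0‖ * 1 + C * (1 + ‖x‖) ^ r * ‖x‖ := by linarith
    _ ≤ ‖f 0‖ * (1 + ‖x‖) ^ (r + 1) + C * (1 + ‖x‖) ^ r * (1 + ‖x‖) := by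
        gcongr; linarith
    _ = _ := by ring

lemma step01 {f f' : ℝ → F} {C : ℝ} (hf : ∀ t, HasDerivAt f (f' t) t) (h0 : f 0 = 0)
    (hb : ∀ t ∈ Set.Icc (0 : ℝ) 1, ‖f' t‖ ≤ C) : ∀ t ∈ Set.Icc (0 : ℝ) 1, ‖f t‖ ≤ C := by
  intro t ht
  have h := norm_image_sub_le_of_norm_deriv_le_segment' (f := f) (f' := f') (a := 0) (b := 1)
    (C := C) (fun s _ => (hf s).hasDerivWithinAt) (fun s hs => hb s ⟨hs.1, hs.2.le⟩) t ht
  rw [h0, sub_zero, sub_zero] at h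
  have hC : 0 ≤ C := (norm_nonneg _).trans (hb t ht)
  exact h.trans (mul_le_of_le_one_right hC ht.2)

/-- Iterated (curried) derivatives. -/
def E1 (V : E → F) : E → E →L[ℝ] F := fderiv ℝ V
def E2 (V : E → F) : E → E →L[ℝ] E →L[ℝ] F := fderiv ℝ (E1 V)
def E3 (V : E → F) : E → E →L[ℝ] E →L[ℝ] E →L[ℝ] F := fderiv ℝ (E2 V)
def E4 (V : E → F) : E → E →L[ℝ] E →L[ℝ] E →L[ℝ] E →L[ℝ] F := fderiv ℝ (E3 V)
def E5 (V : E → F) : E → E →L[ℝ] E →L[ℝ] E →L[ℝ] E →L[ℝ] E →L[ℝ] F := fderiv ℝ (E4 V)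

lemma cd1 {V : E → F} (h : ContDiff ℝ 5 V) : ContDiff ℝ 4 (E1 V) :=
  h.fderiv_right (by norm_num)
lemma cd2 {V : E → F} (h : ContDiff ℝ 5 V) : ContDiff ℝ 3 (E2 V) :=
  (cd1 h).fderiv_right (by norm_num)
lemma cd3 {V : E → F} (h : ContDiff ℝ 5 V) : ContDiff ℝ 2 (E3 V) :=
  (cd2 h).fderiv_right (by norm_num)
lemma cd4 {V : E → F} (h : ContDiff ℝ 5 V) : ContDiff ℝ 1 (E4 V) :=
  (cd3 h).fderiv_right (by norm_num)

lemma norm_E5 (V : E → F) (x : E) : ‖E5 V x‖ = ‖iteratedFDeriv ℝ 5 V x‖ := by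
  rw [← norm_iteratedFDeriv_fderiv, ← norm_iteratedFDeriv_fderiv, ← norm_iteratedFDeriv_fderiv,
    ← norm_iteratedFDeriv_fderiv, ← norm_iteratedFDeriv_fderiv, norm_iteratedFDeriv_zero]
  rfl

lemma pg5 {V : E → F} (h : PolyLocLip (iteratedFDeriv ℝ 5 V)) : PG (E5 V) := by
  obtain ⟨K, hK, r, H⟩ := h
  refine ⟨‖iteratedFDeriv ℝ 5 V 0‖ + 3 * K, by positivity, r + 1, fun x => ?_⟩
  rw [norm_E5]
  have hx := norm_nonneg x
  have h3 : ‖iteratedFDeriv ℝ 5 V x‖ ≤ ‖iteratedFDeriv ℝ 5 V 0‖ +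
      ‖iteratedFDeriv ℝ 5 V x - iteratedFDeriv ℝ 5 V 0‖ := by
    have := norm_add_le (iteratedFDeriv ℝ 5 V 0)
      (iteratedFDeriv ℝ 5 V x - iteratedFDeriv ℝ 5 V 0)
    simpa only [add_sub_cancel] using this
  have h4 : (1 : ℝ) ≤ (1 + ‖x‖) ^ (r + 1) := one_le_pow₀ (by linarith)
  have h5 : (1 : ℝ) ≤ (1 + ‖x‖) ^ r := one_le_pow₀ (by linarith)
  have h6 : ‖x‖ ^ r ≤ (1 + ‖x‖) ^ r := by gcongr; linarith
  have h7 : ‖(0 : E)‖ ^ r ≤ 1 := by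
    rw [norm_zero]; exact pow_le_one₀ le_rfl zero_le_one
  have h8 := H x 0
  rw [sub_zero] at h8
  calc _ ≤ ‖iteratedFDeriv ℝ 5 V 0‖ * 1 + K * (1 + ‖x‖ ^ r + ‖(0 : E)‖ ^ r) * ‖x‖ := by linarith
    _ ≤ ‖iteratedFDeriv ℝ 5 V 0‖ * (1 + ‖x‖) ^ (r + 1)
        + K * (3 * (1 + ‖x‖) ^ r) * (1 + ‖x‖) := by
        gcongr <;> linarith
    _ = _ := by ring

lemma hasDerivAt_line {f : E → F} (hf : Differentiable ℝ f) (x v : E) (t : ℝ) :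
    HasDerivAt (fun t : ℝ => f (x + t • v)) (fderiv ℝ f (x + t • v) v) t := by
  have h1 : HasDerivAt (fun t : ℝ => x + t • v) v t := by
    simpa using ((hasDerivAt_id t).smul_const v).const_add x
  exact (hf _).hasFDerivAt.comp_hasDerivAt t h1

lemma taylor5 {V : E → F} (h : ContDiff ℝ 5 V) (x v : E) (M : ℝ)
    (hM : ∀ t ∈ Set.Icc (0 : ℝ) 1, ‖E5 V (x + t • v)‖ ≤ M) :
    ‖V (x + v) - V x - E1 V x v - (1 / 2 : ℝ) • E2 V x v v - (1 / 6 : ℝ) • E3 V x v v v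
      - (1 / 24 : ℝ) • E4 V x v v v v‖ ≤ M * ‖v‖ * ‖v‖ * ‖v‖ * ‖v‖ * ‖v‖ := by
  have d0 := hasDerivAt_line (h.differentiable (by norm_num)) x v
  have d1 := hasDerivAt_line ((cd1 h).differentiable (by norm_num)) x v
  have d2 := hasDerivAt_line ((cd2 h).differentiable (by norm_num)) x v
  have d3 := hasDerivAt_line ((cd3 h).differentiable (by norm_num)) x v
  have d4 := hasDerivAt_line ((cd4 h).differentiable (by norm_num)) x v
  have p1 : ∀ t : ℝ, HasDerivAt (fun t : ℝ => t) 1 t := fun t => hasDerivAt_id t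
  have p2 : ∀ t : ℝ, HasDerivAt (fun t : ℝ => t ^ 2 / 2) t t := fun t => by
    exact ((hasDerivAt_pow 2 t).div_const 2).congr_deriv (by norm_num; try ring)
  have p3 : ∀ t : ℝ, HasDerivAt (fun t : ℝ => t ^ 3 / 6) (t ^ 2 / 2) t := fun t => by
    exact ((hasDerivAt_pow 3 t).div_const 6).congr_deriv (by norm_num; try ring)
  have p4 : ∀ t : ℝ, HasDerivAt (fun t : ℝ => t ^ 4 / 24) (t ^ 3 / 6) t := fun t => by
    exact ((hasDerivAt_pow 4 t).div_const 24).congr_deriv (by norm_num; try ring)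
  have b4 := step01 (f := fun t => E4 V (x + t • v) - E4 V x) (C := M * ‖v‖)
    (fun t => (d4 t).sub_const _) (by simp)
    (fun t ht => ((E5 V (x + t • v)).le_opNorm v).trans (by gcongr; exact hM t ht))
  have b3 := step01 (f := fun t => E3 V (x + t • v) - E3 V x - t • E4 V x v)
    (f' := fun t => (E4 V (x + t • v) - E4 V x) v)
    (C := M * ‖v‖ * ‖v‖)
    (fun t => by
      refine HasDerivAt.congr_deriv (((d3 t).sub_const (E3 V x)).fun_sub
        ((p1 t).smul_const (E4 V x v))) ?_
      simp [E4]) (by simp)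
    (fun t ht => (ContinuousLinearMap.le_opNorm _ v).trans (by gcongr; exact b4 t ht))
  have b2 := step01 (f := fun t => E2 V (x + t • v) - E2 V x - t • E3 V x v
      - (t ^ 2 / 2) • E4 V x v v)
    (f' := fun t => (E3 V (x + t • v) - E3 V x - t • E4 V x v) v)
    (C := M * ‖v‖ * ‖v‖ * ‖v‖)
    (fun t => by
      refine HasDerivAt.congr_deriv ((((d2 t).sub_const (E2 V x)).fun_sub
        ((p1 t).smul_const (E3 V x v))).fun_sub
        ((p2 t).smul_const (E4 V x v v))) ?_
      simp [E3]) (by simp)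
    (fun t ht => (ContinuousLinearMap.le_opNorm _ v).trans (by gcongr; exact b3 t ht))
  have b1 := step01 (f := fun t => E1 V (x + t • v) - E1 V x - t • E2 V x v
      - (t ^ 2 / 2) • E3 V x v v - (t ^ 3 / 6) • E4 V x v v v)
    (f' := fun t => (E2 V (x + t • v) - E2 V x - t • E3 V x v - (t ^ 2 / 2) • E4 V x v v) v)
    (C := M * ‖v‖ * ‖v‖ * ‖v‖ * ‖v‖)
    (fun t => by
      refine HasDerivAt.congr_deriv (((((d1 t).sub_const (E1 V x)).fun_sub
        ((p1 t).smul_const (E2 V x v))).fun_sub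
        ((p2 t).smul_const (E3 V x v v))).fun_sub
        ((p3 t).smul_const (E4 V x v v v))) ?_
      simp [E2]) (by simp)
    (fun t ht => (ContinuousLinearMap.le_opNorm _ v).trans (by gcongr; exact b2 t ht))
  have b0 := step01 (f := fun t => V (x + t • v) - V x - t • E1 V x v
      - (t ^ 2 / 2) • E2 V x v v - (t ^ 3 / 6) • E3 V x v v v - (t ^ 4 / 24) • E4 V x v v v v)
    (f' := fun t => (E1 V (x + t • v) - E1 V x - t • E2 V x v
      - (t ^ 2 / 2) • E3 V x v v - (t ^ 3 / 6) • E4 V x v v v) v)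
    (C := M * ‖v‖ * ‖v‖ * ‖v‖ * ‖v‖ * ‖v‖)
    (fun t => by
      refine HasDerivAt.congr_deriv ((((((d0 t).sub_const (V x)).fun_sub
        ((p1 t).smul_const (E1 V x v))).fun_sub
        ((p2 t).smul_const (E2 V x v v))).fun_sub
        ((p3 t).smul_const (E3 V x v v v))).fun_sub
        ((p4 t).smul_const (E4 V x v v v v))) ?_
      simp [E1]) (by simp)
    (fun t ht => (ContinuousLinearMap.le_opNorm _ v).trans (by gcongr; exact b1 t ht))
  simpa using b0 1 (by simp)

end helpers

section comp
set_option linter.unusedSectionVars false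
set_option synthInstance.maxHeartbeats 400000
set_option maxSynthPendingDepth 8
set_option maxHeartbeats 1000000

variable {E F G : Type*} [NormedAddCommGroup E] [NormedSpace ℝ E]
  [NormedAddCommGroup F] [NormedSpace ℝ F]

lemma BO.pow_smul0 (k : ℕ) {f : ℝ → E → F} (hf : BO 0 f) :
    BO 0 (fun θ x => θ ^ k • f θ x) := by
  induction k with
  | zero => simpa using hf
  | succ k ih =>
    have := ih.theta_smul0
    refine this.le (fun θ x => ?_)
    rw [smul_smul, pow_succ']

lemma BO.congr {k : ℕ} {f g : ℝ → E → F} (hg : BO k g) (h : ∀ θ x, f θ x = g θ x) : BO k f :=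
  hg.le (fun θ x => by rw [h])

def c1 (V : E → E) (x w0 : E) : E := E1 V x w0
def c2 (V : E → E) (x w0 w1 : E) : E := E1 V x w1 + (1 / 2 : ℝ) • E2 V x w0 w0
def c3 (V : E → E) (x w0 w1 w2 : E) : E :=
  E1 V x w2 + (1 / 2 : ℝ) • (E2 V x w0 w1 + E2 V x w1 w0) + (1 / 6 : ℝ) • E3 V x w0 w0 w0
def c4 (V : E → E) (x w0 w1 w2 w3 : E) : E :=
  E1 V x w3 + (1 / 2 : ℝ) • (E2 V x w0 w2 + E2 V x w1 w1 + E2 V x w2 w0)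
    + (1 / 6 : ℝ) • (E3 V x w1 w0 w0 + E3 V x w0 w1 w0 + E3 V x w0 w0 w1)
    + (1 / 24 : ℝ) • E4 V x w0 w0 w0 w0

lemma exp2 (A : E →L[ℝ] E →L[ℝ] F) (θ : ℝ) (w0 w1 w2 w3 : E) :
    A (w0 + θ • w1 + θ ^ 2 • w2 + θ ^ 3 • w3) (w0 + θ • w1 + θ ^ 2 • w2 + θ ^ 3 • w3) =
    A w0 w0 + θ • (A w0 w1 + A w1 w0) + θ ^ 2 • (A w0 w2 + A w1 w1 + A w2 w0)
    + θ ^ 3 • (A w0 w3 + A w1 w2 + A w2 w1 + A w3 w0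
      + θ • (A w1 w3 + A w2 w2 + A w3 w1) + θ ^ 2 • (A w2 w3 + A w3 w2) + θ ^ 3 • A w3 w3) := by
  simp only [map_add, map_smul, add_apply, smul_apply]
  module

lemma exp3' (A : E →L[ℝ] E →L[ℝ] E →L[ℝ] F) (θ : ℝ) (p w0 w1 q : E)
    (hp : p = w0 + θ • w1 + θ ^ 2 • q) :
    A p p p =
    A w0 w0 w0 + θ • (A w1 w0 w0 + A w0 w1 w0 + A w0 w0 w1)
    + θ ^ 2 • (A p p q + A p q (w0 + θ • w1) + A q (w0 + θ • w1) (w0 + θ • w1)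
      + A w1 w1 w0 + A w1 w0 w1 + A w0 w1 w1 + θ • A w1 w1 w1) := by
  subst hp
  simp only [map_add, map_smul, add_apply, smul_apply]
  module

lemma exp4' (A : E →L[ℝ] E →L[ℝ] E →L[ℝ] E →L[ℝ] F) (θ : ℝ) (p w0 q : E)
    (hp : p = w0 + θ • q) :
    A p p p p = A w0 w0 w0 w0
    + θ • (A p p p q + A p p q w0 + A p q w0 w0 + A q w0 w0 w0) := by
  subst hp
  simp only [map_add, map_smul, add_apply, smul_apply]
  module

lemma comp_exp {V : E → E} (hC : ContDiff ℝ 5 V) {L : NNReal} (hL : LipschitzWith L V)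
    (g5 : PG (E5 V)) (w : ℝ → E → E) (w0 w1 w2 w3 : E → E)
    (h0 : PG w0) (h1 : PG w1) (h2 : PG w2) (h3 : PG w3)
    (hw : BO 4 (fun θ x => w θ x - (w0 x + θ • w1 x + θ ^ 2 • w2 x + θ ^ 3 • w3 x))) :
    BO 5 (fun θ x => V (x + θ • w θ x) - (V x + θ • c1 V x (w0 x) + θ ^ 2 • c2 V x (w0 x) (w1 x)
      + θ ^ 3 • c3 V x (w0 x) (w1 x) (w2 x)
      + θ ^ 4 • c4 V x (w0 x) (w1 x) (w2 x) (w3 x))) := by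
  have g4 : PG (E4 V) := PG.of_fderiv ((cd4 hC).differentiable (by norm_num)) g5
  have g3 : PG (E3 V) := PG.of_fderiv ((cd3 hC).differentiable (by norm_num)) g4
  have g2 : PG (E2 V) := PG.of_fderiv ((cd2 hC).differentiable (by norm_num)) g3
  have b4 := g4.bo
  have b3 := g3.bo
  have b2 := g2.bo
  have k0 := h0.bo
  have k1 := h1.bo
  have k2 := h2.bo
  have k3 := h3.bo
  -- the polynomial
  obtain ⟨p, hp⟩ : ∃ p : ℝ → E → E, p = fun θ x =>
    w0 x + θ • w1 x + θ ^ 2 • w2 x + θ ^ 3 • w3 x := ⟨_, rfl⟩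
  have hpe : ∀ θ x, p θ x = w0 x + θ • w1 x + θ ^ 2 • w2 x + θ ^ 3 • w3 x := fun θ x => by rw [hp]
  have kp : BO 0 p := by
    rw [hp]
    exact ((k0.add k1.theta_smul0).add (k2.pow_smul0 2)).add (k3.pow_smul0 3)
  obtain ⟨u, hu⟩ : ∃ u : ℝ → E → E, u = fun θ x => w0 x + θ • w1 x := ⟨_, rfl⟩
  have ku : BO 0 u := by rw [hu]; exact k0.add k1.theta_smul0
  obtain ⟨q2, hq2⟩ : ∃ q : ℝ → E → E, q = fun θ x => w2 x + θ • w3 x := ⟨_, rfl⟩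
  have kq2 : BO 0 q2 := by rw [hq2]; exact k2.add k3.theta_smul0
  obtain ⟨q1, hq1⟩ : ∃ q : ℝ → E → E, q = fun θ x => w1 x + θ • q2 θ x := ⟨_, rfl⟩
  have kq1 : BO 0 q1 := by rw [hq1]; exact k1.add kq2.theta_smul0
  have a1 : BO 5 (fun θ x => V (x + θ • w θ x) - V (x + θ • p θ x)) := by
    have := (hw.theta_smul).smul_const (L : ℝ)
    refine this.le (fun θ x => ?_)
    have h := hL.norm_sub_le (x + θ • w θ x) (x + θ • p θ x)
    rw [norm_smul, Real.norm_eq_abs, NNReal.abs_eq, ← hpe, smul_sub]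
    simpa using h
  have a2 : BO 5 (fun θ x => V (x + θ • p θ x) - V x - E1 V x (θ • p θ x)
      - (1 / 2 : ℝ) • E2 V x (θ • p θ x) (θ • p θ x)
      - (1 / 6 : ℝ) • E3 V x (θ • p θ x) (θ • p θ x) (θ • p θ x)
      - (1 / 24 : ℝ) • E4 V x (θ • p θ x) (θ • p θ x) (θ • p θ x) (θ • p θ x)) := by
    obtain ⟨K, hK, r, H⟩ := g5
    have e1 : BO 0 (fun θ x => K * (1 + (‖x‖ + ‖θ • p θ x‖)) ^ r * ‖p θ x‖ ^ 5) :=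
      ((BO.const (E := E) K).mul (((BO.const (E := E) (1 : ℝ)).add
        ((BO.id (E := E)).norm.add kp.theta_smul0.norm)).pow r)).mul (kp.norm.pow 5)
    refine (e1.pow_smul 5).le (fun θ x => ?_)
    refine (taylor5 hC x (θ • p θ x) (K * (1 + (‖x‖ + ‖θ • p θ x‖)) ^ r) ?_).trans ?_
    · intro t ht
      refine (H _).trans ?_
      gcongr
      refine (norm_add_le _ _).trans ?_
      gcongr
      rw [norm_smul, Real.norm_eq_abs, abs_of_nonneg ht.1]
      exact mul_le_of_le_one_left (norm_nonneg _) ht.2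
    · have hX : 0 ≤ K * (1 + (‖x‖ + ‖θ • p θ x‖)) ^ r * ‖p θ x‖ ^ 5 := by positivity
      rw [norm_smul (θ ^ 5), Real.norm_of_nonneg hX, norm_pow, norm_smul θ (p θ x)]
      exact le_of_eq (by ring)
  have a3 : BO 0 (fun θ x => (1 / 2 : ℝ) • (E2 V x (w0 x) (w3 x) + E2 V x (w1 x) (w2 x)
        + E2 V x (w2 x) (w1 x) + E2 V x (w3 x) (w0 x)
        + θ • (E2 V x (w1 x) (w3 x) + E2 V x (w2 x) (w2 x) + E2 V x (w3 x) (w1 x))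
        + θ ^ 2 • (E2 V x (w2 x) (w3 x) + E2 V x (w3 x) (w2 x)) + θ ^ 3 • E2 V x (w3 x) (w3 x))
      + (1 / 6 : ℝ) • (E3 V x (p θ x) (p θ x) (q2 θ x) + E3 V x (p θ x) (q2 θ x) (u θ x)
        + E3 V x (q2 θ x) (u θ x) (u θ x)
        + E3 V x (w1 x) (w1 x) (w0 x) + E3 V x (w1 x) (w0 x) (w1 x) + E3 V x (w0 x) (w1 x) (w1 x)
        + θ • E3 V x (w1 x) (w1 x) (w1 x))
      + (1 / 24 : ℝ) • (E4 V x (p θ x) (p θ x) (p θ x) (q1 θ x)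
        + E4 V x (p θ x) (p θ x) (q1 θ x) (w0 x)
        + E4 V x (p θ x) (q1 θ x) (w0 x) (w0 x) + E4 V x (q1 θ x) (w0 x) (w0 x) (w0 x))) := by
    repeat' first
      | assumption
      | refine BO.add ?_ ?_
      | refine BO.pow_smul0 _ ?_
      | refine BO.theta_smul0 ?_
      | refine BO.smul_const _ ?_
      | refine BO.app ?_ ?_
  refine ((a1.add a2).add (a3.pow_smul 5)).congr (fun θ x => ?_)
  have x2 := exp2 (E2 V x) θ (w0 x) (w1 x) (w2 x) (w3 x)
  rw [← hpe] at x2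
  have x3 := exp3' (E3 V x) θ (p θ x) (w0 x) (w1 x) (q2 θ x) (by rw [hpe, hq2]; module)
  have x4 := exp4' (E4 V x) θ (p θ x) (w0 x) (q1 θ x) (by rw [hpe, hq1, hq2]; module)
  have hu' : w0 x + θ • w1 x = u θ x := by rw [hu]
  rw [hu'] at x3
  simp only [map_smul, smul_apply]
  rw [x2, x3, x4]
  have x1 : E1 V x (p θ x) = E1 V x (w0 x) + θ • E1 V x (w1 x) + θ ^ 2 • E1 V x (w2 x)
      + θ ^ 3 • E1 V x (w3 x) := by
    rw [hpe]; simp only [map_add, map_smul]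
  rw [x1]
  unfold c1 c2 c3 c4
  module
end comp

section expansions
set_option linter.unusedSectionVars false
set_option synthInstance.maxHeartbeats 400000
set_option maxSynthPendingDepth 8
set_option maxHeartbeats 1000000

variable {E F G : Type*} [NormedAddCommGroup E] [NormedSpace ℝ E]
  [NormedAddCommGroup F] [NormedSpace ℝ F]

def A0 (V : E → E) (x : E) : E := V x
def A1 (V : E → E) (x : E) : E := c1 V x (A0 V x)
def A2 (V : E → E) (x : E) : E := c2 V x (A0 V x) ((1 / 2 : ℝ) • A1 V x)
def A3 (V : E → E) (x : E) : E :=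
  c3 V x (A0 V x) ((1 / 2 : ℝ) • A1 V x) ((1 / 3 : ℝ) • A2 V x)
def A4 (V : E → E) (x : E) : E :=
  c4 V x (A0 V x) ((1 / 2 : ℝ) • A1 V x) ((1 / 3 : ℝ) • A2 V x) ((1 / 4 : ℝ) • A3 V x)

def K21 (V : E → E) (x : E) : E := c1 V x ((1 / 2 : ℝ) • V x)
def K22 (V : E → E) (x : E) : E := c2 V x ((1 / 2 : ℝ) • V x) 0
def K23 (V : E → E) (x : E) : E := c3 V x ((1 / 2 : ℝ) • V x) 0 0
def K24 (V : E → E) (x : E) : E := c4 V x ((1 / 2 : ℝ) • V x) 0 0 0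

def K31 (V : E → E) (x : E) : E := c1 V x ((1 / 2 : ℝ) • V x)
def K32 (V : E → E) (x : E) : E := c2 V x ((1 / 2 : ℝ) • V x) ((1 / 2 : ℝ) • K21 V x)
def K33 (V : E → E) (x : E) : E := c3 V x ((1 / 2 : ℝ) • V x) ((1 / 2 : ℝ) • K21 V x)
  ((1 / 2 : ℝ) • K22 V x)
def K34 (V : E → E) (x : E) : E := c4 V x ((1 / 2 : ℝ) • V x) ((1 / 2 : ℝ) • K21 V x)
  ((1 / 2 : ℝ) • K22 V x) ((1 / 2 : ℝ) • K23 V x)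

def K41 (V : E → E) (x : E) : E := c1 V x (V x)
def K42 (V : E → E) (x : E) : E := c2 V x (V x) (K31 V x)
def K43 (V : E → E) (x : E) : E := c3 V x (V x) (K31 V x) (K32 V x)
def K44 (V : E → E) (x : E) : E := c4 V x (V x) (K31 V x) (K32 V x) (K33 V x)

lemma ord1 (V : E → E) (x : E) :
    (1 / 2 : ℝ) • A1 V x = (1 / 6 : ℝ) • ((2 : ℝ) • K21 V x + (2 : ℝ) • K31 V x + K41 V x) := by
  simp only [A0, A1, K21, K31, K41, c1, map_smul]
  module

lemma ord2 (V : E → E) (x : E) :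
    (1 / 3 : ℝ) • A2 V x = (1 / 6 : ℝ) • ((2 : ℝ) • K22 V x + (2 : ℝ) • K32 V x + K42 V x) := by
  simp only [A0, A1, A2, K21, K31, K41, K22, K32, K42, c1, c2, map_smul, map_add, map_zero,
    smul_apply]
  module

lemma ord3 (V : E → E) (x : E) :
    (1 / 4 : ℝ) • A3 V x = (1 / 6 : ℝ) • ((2 : ℝ) • K23 V x + (2 : ℝ) • K33 V x + K43 V x) := by
  simp only [A0, A1, A2, A3, K21, K31, K41, K22, K32, K42, K23, K33, K43, c1, c2, c3, map_smul,
    map_add, map_zero, smul_apply, zero_apply, add_apply]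
  module

/-- the fifth order coefficient -/
def hh (V : E → E) (x : E) : E :=
  (1 / 5 : ℝ) • A4 V x
    + (-(1 / 6) : ℝ) • ((2 : ℝ) • K24 V x + (2 : ℝ) • K34 V x + K44 V x)

/-- continuous with polynomial growth -/
def Nice (f : E → F) : Prop := PG f ∧ Continuous f

lemma Nice.smul {f : E → F} (c : ℝ) (h : Nice f) : Nice (fun x => c • f x) :=
  ⟨(h.1.bo.smul_const c).pg, h.2.const_smul c⟩

lemma Nice.add {f g : E → F} (h : Nice f) (h' : Nice g) : Nice (fun x => f x + g x) :=
  ⟨(h.1.bo.add h'.1.bo).pg, h.2.add h'.2⟩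

lemma Nice.app {f : E → F →L[ℝ] E} {g : E → F} (h : Nice f) (h' : Nice g) :
    Nice (fun x => f x (g x)) :=
  ⟨(h.1.bo.app h'.1.bo).pg, h.2.clm_apply h'.2⟩

lemma Nice.app' {H : Type*} [NormedAddCommGroup H] [NormedSpace ℝ H]
    {f : E → F →L[ℝ] H} {g : E → F} (h : Nice f) (h' : Nice g) :
    Nice (fun x => f x (g x)) :=
  ⟨(h.1.bo.app h'.1.bo).pg, h.2.clm_apply h'.2⟩

lemma Nice.zero : Nice (fun _ : E => (0 : F)) :=
  ⟨(BO.const (E := E) (0 : F)).pg, continuous_const⟩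

/-- standing assumptions -/
structure Good (V : E → E) : Prop where
  cd : ContDiff ℝ 5 V
  g5 : PG (E5 V)

section
variable {V : E → E} (hV : Good V)
lemma Good.n4 (hV : Good V) : Nice (E4 V) :=
  ⟨PG.of_fderiv ((cd4 hV.cd).differentiable (by norm_num)) hV.g5, (cd4 hV.cd).continuous⟩
lemma Good.n3 (hV : Good V) : Nice (E3 V) :=
  ⟨PG.of_fderiv ((cd3 hV.cd).differentiable (by norm_num)) hV.n4.1, (cd3 hV.cd).continuous⟩
lemma Good.n2 (hV : Good V) : Nice (E2 V) :=
  ⟨PG.of_fderiv ((cd2 hV.cd).differentiable (by norm_num)) hV.n3.1, (cd2 hV.cd).continuous⟩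
lemma Good.n1 (hV : Good V) : Nice (E1 V) :=
  ⟨PG.of_fderiv ((cd1 hV.cd).differentiable (by norm_num)) hV.n2.1, (cd1 hV.cd).continuous⟩
lemma Good.n0 (hV : Good V) : Nice V :=
  ⟨PG.of_fderiv (hV.cd.differentiable (by norm_num)) hV.n1.1, hV.cd.continuous⟩

variable {w0 w1 w2 w3 : E → E}

lemma Good.c1 (hV : Good V) (h0 : Nice w0) : Nice (fun x => c1 V x (w0 x)) :=
  hV.n1.app' h0

lemma Good.c2 (hV : Good V) (h0 : Nice w0) (h1 : Nice w1) :
    Nice (fun x => c2 V x (w0 x) (w1 x)) :=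
  (hV.n1.app' h1).add (((hV.n2.app' h0).app' h0).smul _)

lemma Good.c3 (hV : Good V) (h0 : Nice w0) (h1 : Nice w1) (h2 : Nice w2) :
    Nice (fun x => c3 V x (w0 x) (w1 x) (w2 x)) :=
  ((hV.n1.app' h2).add ((((hV.n2.app' h0).app' h1).add ((hV.n2.app' h1).app' h0)).smul _)).add
    ((((hV.n3.app' h0).app' h0).app' h0).smul _)

lemma Good.c4 (hV : Good V) (h0 : Nice w0) (h1 : Nice w1) (h2 : Nice w2) (h3 : Nice w3) :
    Nice (fun x => c4 V x (w0 x) (w1 x) (w2 x) (w3 x)) :=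
  (((hV.n1.app' h3).add (((((hV.n2.app' h0).app' h2).add ((hV.n2.app' h1).app' h1)).add
    ((hV.n2.app' h2).app' h0)).smul _)).add
    ((((((hV.n3.app' h1).app' h0).app' h0).add (((hV.n3.app' h0).app' h1).app' h0)).add
      (((hV.n3.app' h0).app' h0).app' h1)).smul _)).add
    (((((hV.n4.app' h0).app' h0).app' h0).app' h0).smul _)

lemma Good.A1 (hV : Good V) : Nice (A1 V) := hV.c1 hV.n0
lemma Good.A2 (hV : Good V) : Nice (A2 V) := hV.c2 hV.n0 (hV.A1.smul _)
lemma Good.A3 (hV : Good V) : Nice (A3 V) := hV.c3 hV.n0 (hV.A1.smul _) (hV.A2.smul _)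
lemma Good.A4 (hV : Good V) : Nice (A4 V) :=
  hV.c4 hV.n0 (hV.A1.smul _) (hV.A2.smul _) (hV.A3.smul _)
lemma Good.K21 (hV : Good V) : Nice (K21 V) := hV.c1 (hV.n0.smul _)
lemma Good.K22 (hV : Good V) : Nice (K22 V) := hV.c2 (hV.n0.smul _) Nice.zero
lemma Good.K23 (hV : Good V) : Nice (K23 V) := hV.c3 (hV.n0.smul _) Nice.zero Nice.zero
lemma Good.K24 (hV : Good V) : Nice (K24 V) :=
  hV.c4 (hV.n0.smul _) Nice.zero Nice.zero Nice.zero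
lemma Good.K31 (hV : Good V) : Nice (K31 V) := hV.c1 (hV.n0.smul _)
lemma Good.K32 (hV : Good V) : Nice (K32 V) := hV.c2 (hV.n0.smul _) (hV.K21.smul _)
lemma Good.K33 (hV : Good V) : Nice (K33 V) :=
  hV.c3 (hV.n0.smul _) (hV.K21.smul _) (hV.K22.smul _)
lemma Good.K34 (hV : Good V) : Nice (K34 V) :=
  hV.c4 (hV.n0.smul _) (hV.K21.smul _) (hV.K22.smul _) (hV.K23.smul _)
lemma Good.K44 (hV : Good V) : Nice (K44 V) :=
  hV.c4 hV.n0 hV.K31 hV.K32 hV.K33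
lemma Good.hh (hV : Good V) : Nice (hh V) :=
  (hV.A4.smul _).add ((((hV.K24.smul _).add (hV.K34.smul _)).add hV.K44).smul _)

end

lemma gronwall_le {K ε : ℝ} (hK : 0 ≤ K) (hε : 0 ≤ ε) :
    gronwallBound 0 K ε 1 ≤ ε * Real.exp K := by
  rcases hK.eq_or_lt with h | h
  · rw [← h, gronwallBound_K0]; simp
  · rw [gronwallBound_of_K_ne_0 h.ne']
    have h1 := Real.add_one_le_exp (-K)
    have h2 : Real.exp K * Real.exp (-K) = 1 := by rw [← Real.exp_add]; simp
    have h3 : Real.exp K - 1 ≤ K * Real.exp K := by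
      nlinarith [Real.exp_pos K]
    simp only [zero_mul, mul_one, zero_add]
    rw [div_mul_eq_mul_div, div_le_iff₀ h]
    nlinarith

/-- polynomial approximating the flow -/
def zz (V : E → E) (x : E) (θ : ℝ) : E :=
  x + θ • (A0 V x + θ • (1 / 2 : ℝ) • A1 V x + θ ^ 2 • (1 / 3 : ℝ) • A2 V x
    + θ ^ 3 • (1 / 4 : ℝ) • A3 V x + θ ^ 4 • (1 / 5 : ℝ) • A4 V x)

lemma zz_deriv (V : E → E) (x : E) (θ : ℝ) :
    HasDerivAt (zz V x) (V x + θ • A1 V x + θ ^ 2 • A2 V x + θ ^ 3 • A3 V x + θ ^ 4 • A4 V x) θ := by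
  have e : zz V x = fun θ : ℝ => x + θ • A0 V x + (θ ^ 2) • ((1 / 2 : ℝ) • A1 V x)
      + θ ^ 3 • ((1 / 3 : ℝ) • A2 V x) + θ ^ 4 • ((1 / 4 : ℝ) • A3 V x)
      + θ ^ 5 • ((1 / 5 : ℝ) • A4 V x) := by
    funext θ; unfold zz; module
  rw [e]
  have h := ((((((hasDerivAt_id θ).smul_const (A0 V x)).const_add x).fun_add
    ((hasDerivAt_pow 2 θ).smul_const ((1 / 2 : ℝ) • A1 V x))).fun_add
    ((hasDerivAt_pow 3 θ).smul_const ((1 / 3 : ℝ) • A2 V x))).fun_add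
    ((hasDerivAt_pow 4 θ).smul_const ((1 / 4 : ℝ) • A3 V x))).fun_add
    ((hasDerivAt_pow 5 θ).smul_const ((1 / 5 : ℝ) • A4 V x))
  refine h.congr_deriv ?_
  simp only [A0]
  push_cast
  module

lemma zz_res {V : E → E} (hV : Good V) {L : NNReal} (hL : LipschitzWith L V) :
    BO 5 (fun θ x => V (zz V x θ) - (V x + θ • A1 V x + θ ^ 2 • A2 V x + θ ^ 3 • A3 V x
      + θ ^ 4 • A4 V x)) := by
  refine comp_exp hV.cd hL hV.g5 (fun θ x => A0 V x + θ • (1 / 2 : ℝ) • A1 V x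
    + θ ^ 2 • (1 / 3 : ℝ) • A2 V x
    + θ ^ 3 • (1 / 4 : ℝ) • A3 V x + θ ^ 4 • (1 / 5 : ℝ) • A4 V x) (A0 V)
    (fun x => (1 / 2 : ℝ) • A1 V x) (fun x => (1 / 3 : ℝ) • A2 V x)
    (fun x => (1 / 4 : ℝ) • A3 V x) hV.n0.1 (hV.A1.smul _).1 (hV.A2.smul _).1 (hV.A3.smul _).1 ?_
  refine ((hV.A4.smul (1 / 5 : ℝ)).1.bo.pow_smul 4).congr (fun θ x => ?_)
  module

lemma flow_exp {V : E → E} (hV : Good V) {L : NNReal} (hL : LipschitzWith L V)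
    (φ : ℝ → E → E) (hφ0 : ∀ x, φ 0 x = x)
    (hφ : ∀ (x : E) (t : ℝ), HasDerivAt (fun s => φ s x) (V (φ t x)) t) :
    BO 6 (fun θ x => φ θ x - zz V x θ) := by
  obtain ⟨C, hC, r, H⟩ := zz_res hV hL
  obtain ⟨m, hm⟩ := exists_nat_ge (L : ℝ)
  refine ⟨C, hC, r + m, fun θ x => ?_⟩
  have hW := one_le_wt θ x
  have hε : 0 ≤ |θ| * (C * |θ| ^ 5 * wt θ x ^ r) := by positivity
  have key := dist_le_of_approx_trajectories_ODE (v := fun _ y => θ • V y) (K := ‖θ‖₊ * L)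
    (f := fun t => φ (θ * t) x) (f' := fun t => θ • V (φ (θ * t) x))
    (g := fun t => zz V x (θ * t))
    (g' := fun t => θ • (V x + (θ * t) • A1 V x + (θ * t) ^ 2 • A2 V x + (θ * t) ^ 3 • A3 V x
      + (θ * t) ^ 4 • A4 V x)) (a := 0) (b := 1) (εf := 0)
    (εg := |θ| * (C * |θ| ^ 5 * wt θ x ^ r)) (δ := 0)
    (fun t => (LipschitzWith.of_dist_le_mul (fun y z => by
      rw [dist_smul₀]
      push_cast
      rw [mul_assoc]
      exact mul_le_mul_of_nonneg_left (hL.dist_le_mul y z) (norm_nonneg _))))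
    ?_ ?_ ?_ ?_ ?_ ?_ ?_ 1 (by simp)
  · simp only [mul_one, sub_zero, zero_add, dist_eq_norm] at key
    refine key.trans ((gronwall_le (by positivity) hε).trans ?_)
    have e1 : Real.exp ((‖θ‖₊ * L : NNReal) : ℝ) ≤ wt θ x ^ m := by
      push_cast
      calc Real.exp (‖θ‖ * L) ≤ Real.exp (m * |θ|) := by
            rw [Real.exp_le_exp, Real.norm_eq_abs, mul_comm]
            gcongr
        _ = Real.exp |θ| ^ m := Real.exp_nat_mul _ _
        _ ≤ wt θ x ^ m := by
            unfold wt
            gcongr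
            exact le_mul_of_one_le_right (Real.exp_pos _).le (by linarith [norm_nonneg x])
    calc _ ≤ |θ| * (C * |θ| ^ 5 * wt θ x ^ r) * wt θ x ^ m := by gcongr
      _ = _ := by ring
  · intro t _
    exact (((hφ x (θ * t)).scomp t ((hasDerivAt_id t).const_mul θ))).continuousAt.continuousWithinAt
  · intro t _
    refine HasDerivAt.hasDerivWithinAt ?_
    have := ((hφ x (θ * t)).scomp t ((hasDerivAt_id t).const_mul θ))
    rw [mul_one] at this; exact this
  · intro t _; simp
  · intro t _
    exact (((zz_deriv V x (θ * t)).scomp t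
      ((hasDerivAt_id t).const_mul θ))).continuousAt.continuousWithinAt
  · intro t _
    refine HasDerivAt.hasDerivWithinAt ?_
    have := ((zz_deriv V x (θ * t)).scomp t ((hasDerivAt_id t).const_mul θ))
    rw [mul_one] at this
    exact this
  · intro t ht
    rw [dist_smul₀, dist_comm, dist_eq_norm, Real.norm_eq_abs]
    have hb : |θ * t| ≤ |θ| := by
      rw [abs_mul, abs_of_nonneg ht.1]
      exact mul_le_of_le_one_right (abs_nonneg _) ht.2.le
    refine mul_le_mul_of_nonneg_left ((H (θ * t) x).trans ?_) (abs_nonneg _)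
    have : wt (θ * t) x ≤ wt θ x := by
      unfold wt
      gcongr
    have := one_le_wt (θ * t) x
    gcongr
  · simp [hφ0, zz]

/-- stages -/
def S2 (V : E → E) (θ : ℝ) (x : E) : E := V (x + θ • (1 / 2 : ℝ) • V x)
def S3 (V : E → E) (θ : ℝ) (x : E) : E := V (x + θ • (1 / 2 : ℝ) • S2 V θ x)
def S4 (V : E → E) (θ : ℝ) (x : E) : E := V (x + θ • S3 V θ x)

lemma s2_exp {V : E → E} (hV : Good V) {L : NNReal} (hL : LipschitzWith L V) :
    BO 5 (fun θ x => S2 V θ x - (V x + θ • K21 V x + θ ^ 2 • K22 V x + θ ^ 3 • K23 V x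
      + θ ^ 4 • K24 V x)) := by
  refine comp_exp hV.cd hL hV.g5 (fun θ x => (1 / 2 : ℝ) • V x)
    (fun x => (1 / 2 : ℝ) • V x) (fun _ => 0) (fun _ => 0) (fun _ => 0) (hV.n0.smul _).1
    Nice.zero.1 Nice.zero.1 Nice.zero.1 ?_
  exact ⟨0, le_rfl, 0, fun θ x => by simp⟩

lemma s3_exp {V : E → E} (hV : Good V) {L : NNReal} (hL : LipschitzWith L V) :
    BO 5 (fun θ x => S3 V θ x - (V x + θ • K31 V x + θ ^ 2 • K32 V x + θ ^ 3 • K33 V x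
      + θ ^ 4 • K34 V x)) := by
  refine comp_exp hV.cd hL hV.g5 (fun θ x => (1 / 2 : ℝ) • S2 V θ x)
    (fun x => (1 / 2 : ℝ) • V x) (fun x => (1 / 2 : ℝ) • K21 V x) (fun x => (1 / 2 : ℝ) • K22 V x)
    (fun x => (1 / 2 : ℝ) • K23 V x) (hV.n0.smul _).1
    (hV.K21.smul _).1 (hV.K22.smul _).1 (hV.K23.smul _).1 ?_
  refine (((s2_exp hV hL).smul_const (1 / 2 : ℝ)).mono.add
    ((hV.K24.smul (1 / 2 : ℝ)).1.bo.pow_smul 4)).congr (fun θ x => ?_)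
  module

lemma s4_exp {V : E → E} (hV : Good V) {L : NNReal} (hL : LipschitzWith L V) :
    BO 5 (fun θ x => S4 V θ x - (V x + θ • K41 V x + θ ^ 2 • K42 V x + θ ^ 3 • K43 V x
      + θ ^ 4 • K44 V x)) := by
  refine comp_exp hV.cd hL hV.g5 (fun θ x => S3 V θ x)
    V (K31 V) (K32 V) (K33 V) hV.n0.1 hV.K31.1 hV.K32.1 hV.K33.1 ?_
  refine ((s3_exp hV hL).mono.add (hV.K34.1.bo.pow_smul 4)).congr (fun θ x => ?_)
  module

lemma main_exp {V : E → E} (hV : Good V) {L : NNReal} (hL : LipschitzWith L V)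
    (φ : ℝ → E → E) (hφ0 : ∀ x, φ 0 x = x)
    (hφ : ∀ (x : E) (t : ℝ), HasDerivAt (fun s => φ s x) (V (φ t x)) t) :
    BO 6 (fun θ x => φ θ x - (x + (θ / 6) • (V x + (2 : ℝ) • S2 V θ x + (2 : ℝ) • S3 V θ x
      + S4 V θ x)) - θ ^ 5 • hh V x) := by
  have hs := ((((s2_exp hV hL).smul_const (2 : ℝ)).add ((s3_exp hV hL).smul_const (2 : ℝ))).add
    (s4_exp hV hL)).theta_smul.smul_const (-(1 / 6) : ℝ)
  refine ((flow_exp hV hL φ hφ0 hφ).add hs).congr (fun θ x => ?_)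
  unfold zz hh
  rw [ord1, ord2, ord3]
  simp only [A0]
  module

end expansions

section gauss

lemma gauss_int (M : ℕ) (a : ℝ) (ha : 0 ≤ a) (v : NNReal) :
    Integrable (fun z : ℝ => |z| ^ M * Real.exp (a * |z|)) (gaussianReal 0 v) := by
  have h1 := integrable_exp_mul_gaussianReal (μ := 0) (v := v) (a + 1)
  have h2 := integrable_exp_mul_gaussianReal (μ := 0) (v := v) (-(a + 1))
  refine ((h1.add h2).const_mul (M.factorial : ℝ)).mono' (by fun_prop) ?_
  refine Filter.Eventually.of_forall fun z => ?_
  have hz := Real.pow_div_factorial_le_exp |z| (abs_nonneg z) M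
  have hf : (0 : ℝ) < M.factorial := by positivity
  rw [div_le_iff₀ hf] at hz
  have he : Real.exp ((a + 1) * |z|) ≤ Real.exp ((a + 1) * z) + Real.exp (-(a + 1) * z) := by
    rcases abs_cases z with ⟨h, _⟩ | ⟨h, _⟩
    · rw [h]; linarith [Real.exp_pos (-(a + 1) * z)]
    · rw [h, mul_neg, ← neg_mul]; linarith [Real.exp_pos ((a + 1) * z)]
  rw [Real.norm_of_nonneg (by positivity)]
  calc |z| ^ M * Real.exp (a * |z|) ≤ (Real.exp |z| * M.factorial) * Real.exp (a * |z|) := by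
        gcongr
    _ = M.factorial * Real.exp ((a + 1) * |z|) := by
        rw [show (a + 1) * |z| = |z| + a * |z| by ring, Real.exp_add]; ring
    _ ≤ _ := by
        simp only [Pi.add_apply]
        gcongr

lemma gauss_bound (T : ℝ) (M : ℕ) (a : ℝ) (ha : 0 ≤ a) :
    ∃ C : ℝ, 0 ≤ C ∧ ∀ θ ∈ Set.Icc (0 : ℝ) T,
      ∫ z : ℝ, |z| ^ (2 * M) * Real.exp (a * |z|) ∂(gaussianReal 0 (Real.toNNReal θ)) ≤
        C * θ ^ M := by
  refine ⟨∫ z : ℝ, |z| ^ (2 * M) * Real.exp ((a * √T) * |z|) ∂(gaussianReal 0 1),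
    integral_nonneg fun z => by positivity, fun θ hθ => ?_⟩
  have hmap : gaussianReal 0 (Real.toNNReal θ) = (gaussianReal 0 1).map (√θ * ·) := by
    rw [gaussianReal_map_const_mul]
    congr 1
    · simp
    · ext
      simp [Real.sq_sqrt hθ.1, hθ.1]
  rw [hmap, integral_map (by fun_prop) (by fun_prop), ← integral_mul_const]
  refine integral_mono_of_nonneg (Filter.Eventually.of_forall fun z => by positivity)
    ((gauss_int (2 * M) (a * √T) (by positivity) 1).mul_const _)
    (Filter.Eventually.of_forall fun z => ?_)
  have h1 : √θ ≤ √T := Real.sqrt_le_sqrt hθ.2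
  have h2 : |√θ * z| = √θ * |z| := by rw [abs_mul, abs_of_nonneg (Real.sqrt_nonneg _)]
  have h3 : √θ ^ (2 * M) = θ ^ M := by rw [pow_mul, Real.sq_sqrt hθ.1]
  have h0 : 0 ≤ θ := hθ.1
  simp only [h2, mul_pow, h3]
  calc θ ^ M * |z| ^ (2 * M) * Real.exp (a * (√θ * |z|))
      ≤ θ ^ M * |z| ^ (2 * M) * Real.exp (a * (√T * |z|)) := by gcongr
    _ = _ := by rw [mul_assoc a]; ring

lemma one_add_pow_le (y : ℝ) (hy : 0 ≤ y) (r : ℕ) : (1 + y) ^ r ≤ 2 ^ r * (1 + y ^ r) := by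
  rcases le_total y 1 with h | h
  · calc (1 + y) ^ r ≤ 2 ^ r := by gcongr; linarith
      _ ≤ 2 ^ r * (1 + y ^ r) := le_mul_of_one_le_right (by positivity)
          (by linarith [pow_nonneg hy r])
  · calc (1 + y) ^ r ≤ (2 * y) ^ r := by gcongr; linarith
      _ = 2 ^ r * y ^ r := mul_pow _ _ _
      _ ≤ 2 ^ r * (1 + y ^ r) := by gcongr; linarith

end gauss

/-- moment bound for the local error of the fourth-order
Runge–Kutta scheme over a centered Gaussian time increment of variance `θ`. -/
theorem rk4_gaussian_local_error {n : ℕ} (T : ℝ) (hT : 0 < T) (V : Vec n → Vec n)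
    (hLip : ∃ L : NNReal, LipschitzWith L V)
    (hC5 : ContDiff ℝ 5 V)
    (hD5 : PolyLocLip (iteratedFDeriv ℝ 5 V))
    (φ : ℝ → Vec n → Vec n) (hφ : IsFlow V φ) :
    ∃ hV : Vec n → Vec n, Continuous hV ∧
      (∃ K : ℝ, 0 ≤ K ∧ ∃ r : ℕ, ∀ x, ‖hV x‖ ≤ K * (1 + ‖x‖ ^ r)) ∧
      ∀ p : ℕ, 1 ≤ p → ∃ C : ℝ, 0 < C ∧ ∃ q : ℕ, 1 ≤ q ∧
        ∀ θ ∈ Set.Icc (0 : ℝ) T, ∀ x : Vec n,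
          ∫ g : ℝ, ‖φ g x - rk4 V g x - g ^ 5 • hV x‖ ^ (2 * p)
              ∂(gaussianReal 0 (Real.toNNReal θ)) ≤
            C * (1 + ‖x‖ ^ (2 * q)) * θ ^ (6 * p) := by
  obtain ⟨L, hL⟩ := hLip
  have hG : Good V := ⟨hC5, pg5 hD5⟩
  obtain ⟨⟨K, hK, s, HK⟩, hcont⟩ := hG.hh
  refine ⟨hh V, hcont, ⟨K * 2 ^ s, by positivity, s, fun x => ?_⟩, fun p hp => ?_⟩
  · calc ‖hh V x‖ ≤ K * (1 + ‖x‖) ^ s := HK x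
      _ ≤ K * (2 ^ s * (1 + ‖x‖ ^ s)) := by
          gcongr
          exact one_add_pow_le _ (norm_nonneg x) s
      _ = _ := by ring
  obtain ⟨B, hB, r, HB⟩ := main_exp hG hL φ hφ.1 hφ.2
  obtain ⟨D, hD, HD⟩ := gauss_bound T (6 * p) ((2 * p * (r + 1) : ℕ) : ℝ) (by positivity)
  have key : ∀ (g : ℝ) (x : Vec n), ‖φ g x - rk4 V g x - g ^ 5 • hh V x‖ ^ (2 * p) ≤
      (B ^ (2 * p) * (1 + ‖x‖) ^ (2 * (p * (r + 1)))) *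
        (|g| ^ (2 * (6 * p)) * Real.exp (((2 * p * (r + 1) : ℕ) : ℝ) * |g|)) := by
    intro g x
    have hrk : rk4 V g x = x + (g / 6) • (V x + (2 : ℝ) • S2 V g x + (2 : ℝ) • S3 V g x
      + S4 V g x) := by
      have e : ∀ v : Vec n, (g / 2) • v = g • (1 / 2 : ℝ) • v := fun v => by
        rw [smul_smul]; congr 1; ring
      simp only [rk4, S4, S3, S2, e]
    have hw := one_le_wt g x
    have h1 : ‖φ g x - rk4 V g x - g ^ 5 • hh V x‖ ≤ B * |g| ^ 6 * wt g x ^ (r + 1) := by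
      rw [hrk]
      refine (HB g x).trans ?_
      gcongr
      omega
    calc ‖φ g x - rk4 V g x - g ^ 5 • hh V x‖ ^ (2 * p)
        ≤ (B * |g| ^ 6 * wt g x ^ (r + 1)) ^ (2 * p) := by gcongr
      _ = _ := by
        rw [Real.exp_nat_mul, wt]
        simp only [mul_pow, ← pow_mul]
        rw [show 2 * p * (r + 1) = (r + 1) * (2 * p) by ring,
          show 2 * (p * (r + 1)) = (r + 1) * (2 * p) by ring,
          show 2 * (6 * p) = 6 * (2 * p) by ring]
        ring
  refine ⟨B ^ (2 * p) * 2 ^ (2 * (p * (r + 1))) * D + 1, by positivity, p * (r + 1),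
    Nat.mul_pos hp (Nat.succ_pos r), fun θ hθ x => ?_⟩
  have h0 : 0 ≤ θ := hθ.1
  calc ∫ g : ℝ, ‖φ g x - rk4 V g x - g ^ 5 • hh V x‖ ^ (2 * p)
              ∂(gaussianReal 0 (Real.toNNReal θ))
      ≤ ∫ g : ℝ, (B ^ (2 * p) * (1 + ‖x‖) ^ (2 * (p * (r + 1)))) *
        (|g| ^ (2 * (6 * p)) * Real.exp (((2 * p * (r + 1) : ℕ) : ℝ) * |g|))
          ∂(gaussianReal 0 (Real.toNNReal θ)) :=
        integral_mono_of_nonneg (Filter.Eventually.of_forall fun g => by positivity)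
          ((gauss_int _ _ (by positivity) _).const_mul _)
          (Filter.Eventually.of_forall fun g => key g x)
    _ ≤ (B ^ (2 * p) * (1 + ‖x‖) ^ (2 * (p * (r + 1)))) * (D * θ ^ (6 * p)) := by
        rw [integral_const_mul]
        gcongr
        exact HD θ hθ
    _ ≤ (B ^ (2 * p) * (2 ^ (2 * (p * (r + 1))) * (1 + ‖x‖ ^ (2 * (p * (r + 1)))))) *
          (D * θ ^ (6 * p)) := by
        gcongr
        exact one_add_pow_le _ (norm_nonneg x) _
    _ = (B ^ (2 * p) * 2 ^ (2 * (p * (r + 1))) * D) * (1 + ‖x‖ ^ (2 * (p * (r + 1)))) *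
          θ ^ (6 * p) := by ring
    _ ≤ _ := by
        gcongr
        linarith
end
end

section
/- Let T > 0 and let V : ℝⁿ → ℝⁿ be Lipschitz continuous, V ∈ C⁵(ℝⁿ,ℝⁿ), with derivatives of order 5 locally Lipschitz with polynomially growing Lipschitz constants. Then there exist a continuous function h_V : ℝⁿ → ℝⁿ with polynomial growth, C > 0 and q ∈ ℕ* such that for all θ ∈ [−T,T] and x ∈ ℝⁿ, ‖exp(θV)x − Ψ₄^V(θ,x) − h_V(x)θ⁵‖ ≤ C(1 + ‖x‖^q)θ⁶. -/
noncomputable section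

namespace RK4Aux

set_option linter.all false
set_option linter.unusedSectionVars false
set_option linter.deprecated false
set_option synthInstance.maxHeartbeats 400000
set_option synthInstance.maxSize 4000
set_option maxSynthPendingDepth 5
set_option maxHeartbeats 1000000

variable {E : Type*} [NormedAddCommGroup E] [NormedSpace ℝ E]
variable {F : Type*} [NormedAddCommGroup F] [NormedSpace ℝ F]
variable {G : Type*} [NormedAddCommGroup G] [NormedSpace ℝ G]

/-- `f θ x = O(θ ^ m)` on `[-T, T]` with polynomially growing constant. -/
def Big (T : ℝ) (m : ℕ) (f : ℝ → E → F) : Prop :=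
  ∃ C : ℝ, 0 ≤ C ∧ ∃ q : ℕ, ∀ θ : ℝ, |θ| ≤ T → ∀ x, ‖f θ x‖ ≤ C * (1 + ‖x‖) ^ q * |θ| ^ m

/-- continuous with polynomial growth -/
def Nice (f : E → F) : Prop :=
  Continuous f ∧ ∃ C : ℝ, 0 ≤ C ∧ ∃ q : ℕ, ∀ x, ‖f x‖ ≤ C * (1 + ‖x‖) ^ q

lemma pw {a : ℝ} (x : E) (ha : 0 ≤ a) {q r : ℕ} (h : q ≤ r) :
    a * (1 + ‖x‖) ^ q ≤ a * (1 + ‖x‖) ^ r := by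
  have : (1 : ℝ) ≤ 1 + ‖x‖ := by linarith [norm_nonneg x]
  gcongr

lemma Big.add {T : ℝ} {m : ℕ} {f g : ℝ → E → F} (hf : Big T m f) (hg : Big T m g) :
    Big T m (fun θ x => f θ x + g θ x) := by
  obtain ⟨C, hC, q, h⟩ := hf
  obtain ⟨C', hC', q', h'⟩ := hg
  refine ⟨C + C', by positivity, max q q', fun θ hθ x => ?_⟩
  have h1 := h θ hθ x
  have h2 := h' θ hθ x
  have h3 := mul_le_mul_of_nonneg_right (pw x hC (le_max_left q q')) (pow_nonneg (abs_nonneg θ) m)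
  have h4 := mul_le_mul_of_nonneg_right (pw x hC' (le_max_right q q')) (pow_nonneg (abs_nonneg θ) m)
  calc _ ≤ ‖f θ x‖ + ‖g θ x‖ := norm_add_le _ _
    _ ≤ _ := by linarith

lemma Big.smul {T : ℝ} {m : ℕ} {f : ℝ → E → F} (c : ℝ) (hf : Big T m f) :
    Big T m (fun θ x => c • f θ x) := by
  obtain ⟨C, hC, q, h⟩ := hf
  refine ⟨|c| * C, by positivity, q, fun θ hθ x => ?_⟩
  rw [norm_smul, Real.norm_eq_abs]
  have := mul_le_mul_of_nonneg_left (h θ hθ x) (abs_nonneg c)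
  linarith

lemma Big.pow_smul {T : ℝ} {m : ℕ} {f : ℝ → E → F} (k : ℕ) (hf : Big T m f) :
    Big T (k + m) (fun θ x => θ ^ k • f θ x) := by
  obtain ⟨C, hC, q, h⟩ := hf
  refine ⟨C, hC, q, fun θ hθ x => ?_⟩
  rw [norm_smul, norm_pow, Real.norm_eq_abs]
  have := mul_le_mul_of_nonneg_left (h θ hθ x) (pow_nonneg (abs_nonneg θ) k)
  rw [pow_add]
  linarith

lemma Big.weaken {T : ℝ} (hT : 0 ≤ T) {m k : ℕ} {f : ℝ → E → F} (hf : Big T (k + m) f) :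
    Big T m f := by
  obtain ⟨C, hC, q, h⟩ := hf
  refine ⟨C * T ^ k, by positivity, q, fun θ hθ x => (h θ hθ x).trans ?_⟩
  have : |θ| ^ k ≤ T ^ k := by gcongr
  rw [pow_add]
  calc _ ≤ C * (1 + ‖x‖) ^ q * (T ^ k * |θ| ^ m) := by gcongr
    _ = _ := by ring

lemma Big.tsmul {T : ℝ} (hT : 0 ≤ T) {f : ℝ → E → F} (hf : Big T 0 f) :
    Big T 0 (fun θ x => θ • f θ x) := by
  have := Big.weaken (k := 1) hT (Big.pow_smul 1 hf)
  simpa using this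

lemma Big.app {T : ℝ} {f : ℝ → E → (F →L[ℝ] G)} {g : ℝ → E → F}
    (hf : Big T 0 f) (hg : Big T 0 g) : Big T 0 (fun θ x => f θ x (g θ x)) := by
  obtain ⟨C, hC, q, h⟩ := hf
  obtain ⟨C', hC', q', h'⟩ := hg
  refine ⟨C * C', by positivity, q + q', fun θ hθ x => ?_⟩
  have h1 := h θ hθ x
  have h2 := h' θ hθ x
  simp only [pow_zero, mul_one] at h1 h2 ⊢
  calc _ ≤ ‖f θ x‖ * ‖g θ x‖ := ContinuousLinearMap.le_opNorm _ _
    _ ≤ (C * (1 + ‖x‖) ^ q) * (C' * (1 + ‖x‖) ^ q') := by gcongr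
    _ = _ := by ring

lemma Nice.big {T : ℝ} {f : E → F} (hf : Nice f) : Big T 0 (fun _ x => f x) := by
  obtain ⟨-, C, hC, q, h⟩ := hf
  exact ⟨C, hC, q, fun θ _ x => by simpa using h x⟩

lemma Nice.of_big {f : E → F} (hc : Continuous f) (hf : Big 0 0 (fun _ x => f x)) : Nice f := by
  obtain ⟨C, hC, q, h⟩ := hf
  exact ⟨hc, C, hC, q, fun x => by simpa using h 0 (by simp) x⟩

lemma Nice.add {f g : E → F} (hf : Nice f) (hg : Nice g) : Nice (fun x => f x + g x) :=
  Nice.of_big (hf.1.add hg.1) (hf.big.add hg.big)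

lemma Nice.smul {f : E → F} (c : ℝ) (hf : Nice f) : Nice (fun x => c • f x) :=
  Nice.of_big (hf.1.const_smul c) (hf.big.smul c)

lemma Nice.app {f : E → (F →L[ℝ] G)} {g : E → F} (hf : Nice f) (hg : Nice g) :
    Nice (fun x => f x (g x)) :=
  Nice.of_big (hf.1.clm_apply hg.1) (hf.big.app hg.big)

lemma Nice.of_fderiv {f : E → F} (hd : Differentiable ℝ f) (hf : Nice (fderiv ℝ f)) :
    Nice f := by
  obtain ⟨-, C, hC, q, h⟩ := hf
  refine ⟨hd.continuous, ‖f 0‖ + C, by positivity, q + 1, fun x => ?_⟩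
  have h1 : ‖f x - f 0‖ ≤ C * (1 + ‖x‖) ^ q * ‖x - 0‖ := by
    refine (convex_closedBall (0 : E) ‖x‖).norm_image_sub_le_of_norm_fderiv_le (𝕜 := ℝ)
      (fun y _ => hd y) (fun y hy => ?_) (by simp) (by simp)
    refine (h y).trans ?_
    have : ‖y‖ ≤ ‖x‖ := by simpa using hy
    gcongr
  have h2 : ‖f x‖ ≤ ‖f 0‖ + ‖f x - f 0‖ := by
    simpa using norm_add_le (f 0) (f x - f 0)
  have h3 : (1 : ℝ) ≤ (1 + ‖x‖) ^ (q + 1) := one_le_pow₀ (by linarith [norm_nonneg x])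
  have h4 : C * (1 + ‖x‖) ^ q * ‖x - 0‖ ≤ C * (1 + ‖x‖) ^ (q + 1) := by
    rw [sub_zero, pow_succ, ← mul_assoc]
    gcongr
    linarith
  nlinarith [norm_nonneg (f 0)]

/-- one-dimensional Taylor bound -/
lemma step {f f' : ℝ → F} {M : ℝ} (h : ∀ t, HasDerivAt f (f' t) t)
    (hb : ∀ t ∈ Set.Icc (0 : ℝ) 1, ‖f' t‖ ≤ M) (hM : 0 ≤ M) :
    ∀ t ∈ Set.Icc (0 : ℝ) 1, ‖f t - f 0‖ ≤ M := by
  intro t ht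
  have := norm_image_sub_le_of_norm_deriv_le_segment' (f := f) (f' := f') (a := 0) (b := 1) (C := M)
    (fun x _ => (h x).hasDerivWithinAt) (fun x hx => hb x ⟨hx.1, hx.2.le⟩) t ht
  refine this.trans ?_
  nlinarith [ht.1, ht.2]

lemma taylor1 {g0 g1 g2 g3 g4 g5 : ℝ → F} {M : ℝ} (hM : 0 ≤ M)
    (h0 : ∀ t, HasDerivAt g0 (g1 t) t) (h1 : ∀ t, HasDerivAt g1 (g2 t) t)
    (h2 : ∀ t, HasDerivAt g2 (g3 t) t) (h3 : ∀ t, HasDerivAt g3 (g4 t) t)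
    (h4 : ∀ t, HasDerivAt g4 (g5 t) t) (hb : ∀ t ∈ Set.Icc (0 : ℝ) 1, ‖g5 t‖ ≤ M) :
    ‖g0 1 - (g0 0 + g1 0 + (1 / 2 : ℝ) • g2 0 + (1 / 6 : ℝ) • g3 0 + (1 / 24 : ℝ) • g4 0)‖ ≤ M := by
  have p1 (t : ℝ) : HasDerivAt (fun t : ℝ => t) 1 t := hasDerivAt_id t
  have p2 (t : ℝ) : HasDerivAt (fun t : ℝ => t ^ 2 / 2) t t := by
    refine ((hasDerivAt_pow 2 t).div_const 2).congr_deriv ?_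
    push_cast
    ring
  have p3 (t : ℝ) : HasDerivAt (fun t : ℝ => t ^ 3 / 6) (t ^ 2 / 2) t := by
    refine ((hasDerivAt_pow 3 t).div_const 6).congr_deriv ?_
    push_cast
    ring
  have p4 (t : ℝ) : HasDerivAt (fun t : ℝ => t ^ 4 / 24) (t ^ 3 / 6) t := by
    refine ((hasDerivAt_pow 4 t).div_const 24).congr_deriv ?_
    push_cast
    ring
  have b4 := step h4 hb hM
  have b3 := step (f := fun t => g3 t - t • g4 0) (f' := fun t => g4 t - g4 0)
    (fun t => by simpa using (h3 t).fun_sub ((p1 t).smul_const (g4 0))) b4 hM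
  have b2 := step (f := fun t => g2 t - t • g3 0 - (t ^ 2 / 2) • g4 0)
    (f' := fun t => g3 t - g3 0 - t • g4 0)
    (fun t => by simpa using ((h2 t).fun_sub ((p1 t).smul_const (g3 0))).fun_sub ((p2 t).smul_const (g4 0)))
    (fun t ht => by
      have := b3 t ht
      simp only [zero_smul, sub_zero] at this
      rwa [sub_right_comm] at this) hM
  have b1 := step (f := fun t => g1 t - t • g2 0 - (t ^ 2 / 2) • g3 0 - (t ^ 3 / 6) • g4 0)
    (f' := fun t => g2 t - g2 0 - t • g3 0 - (t ^ 2 / 2) • g4 0)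
    (fun t => by
      simpa using (((h1 t).fun_sub ((p1 t).smul_const (g2 0))).fun_sub ((p2 t).smul_const (g3 0))).fun_sub
        ((p3 t).smul_const (g4 0)))
    (fun t ht => by
      have := b2 t ht
      convert this using 2
      simp
      abel) hM
  have b0 := step (f := fun t => g0 t - t • g1 0 - (t ^ 2 / 2) • g2 0 - (t ^ 3 / 6) • g3 0
      - (t ^ 4 / 24) • g4 0)
    (f' := fun t => g1 t - g1 0 - t • g2 0 - (t ^ 2 / 2) • g3 0 - (t ^ 3 / 6) • g4 0)
    (fun t => by
      simpa using ((((h0 t).fun_sub ((p1 t).smul_const (g1 0))).fun_sub ((p2 t).smul_const (g2 0))).fun_sub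
        ((p3 t).smul_const (g3 0))).fun_sub ((p4 t).smul_const (g4 0)))
    (fun t ht => by
      have := b1 t ht
      convert this using 2
      simp
      abel) hM
  have := b0 1 (by simp)
  convert this using 2
  simp
  module

/-- the derivatives, curried -/
noncomputable abbrev D1 (V : E → E) : E → (E →L[ℝ] E) := fderiv ℝ V
noncomputable abbrev D2 (V : E → E) : E → (E →L[ℝ] E →L[ℝ] E) := fderiv ℝ (D1 V)
noncomputable abbrev D3 (V : E → E) : E → (E →L[ℝ] E →L[ℝ] E →L[ℝ] E) := fderiv ℝ (D2 V)
noncomputable abbrev D4 (V : E → E) : E → (E →L[ℝ] E →L[ℝ] E →L[ℝ] E →L[ℝ] E) := fderiv ℝ (D3 V)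
noncomputable abbrev D5 (V : E → E) : E → (E →L[ℝ] E →L[ℝ] E →L[ℝ] E →L[ℝ] E →L[ℝ] E) := fderiv ℝ (D4 V)

lemma cd_fderiv {f : E → F} {k : ℕ} (h : ContDiff ℝ (k + 1 : ℕ) f) :
    ContDiff ℝ k (fderiv ℝ f) := h.fderiv_right (by norm_cast)

structure Reg (V : E → E) : Prop where
  d0 : Differentiable ℝ V
  d1 : Differentiable ℝ (D1 V)
  d2 : Differentiable ℝ (D2 V)
  d3 : Differentiable ℝ (D3 V)
  d4 : Differentiable ℝ (D4 V)
  n0 : Nice V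
  n1 : Nice (D1 V)
  n2 : Nice (D2 V)
  n3 : Nice (D3 V)
  n4 : Nice (D4 V)
  n5 : Nice (D5 V)

lemma reg_of {V : E → E} (h : ContDiff ℝ 5 V) {K : ℝ} (hK : 0 ≤ K) {r : ℕ}
    (hD : ∀ x, ‖iteratedFDeriv ℝ 5 V x‖ ≤ K * (1 + ‖x‖) ^ r) : Reg V := by
  have c0 : ContDiff ℝ (5 : ℕ) V := by exact_mod_cast h
  have c1 : ContDiff ℝ (4 : ℕ) (D1 V) := cd_fderiv c0
  have c2 : ContDiff ℝ (3 : ℕ) (D2 V) := cd_fderiv c1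
  have c3 : ContDiff ℝ (2 : ℕ) (D3 V) := cd_fderiv c2
  have c4 : ContDiff ℝ (1 : ℕ) (D4 V) := cd_fderiv c3
  have c5 : ContDiff ℝ (0 : ℕ) (D5 V) := cd_fderiv c4
  have d0 := c0.differentiable (by norm_num)
  have d1 := c1.differentiable (by norm_num)
  have d2 := c2.differentiable (by norm_num)
  have d3 := c3.differentiable (by norm_num)
  have d4 := c4.differentiable (by norm_num)
  have n5 : Nice (D5 V) := by
    refine ⟨c5.continuous, K, hK, r, fun x => ?_⟩
    rw [← norm_iteratedFDeriv_zero (𝕜 := ℝ) (f := D5 V), norm_iteratedFDeriv_fderiv,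
      norm_iteratedFDeriv_fderiv, norm_iteratedFDeriv_fderiv, norm_iteratedFDeriv_fderiv,
      norm_iteratedFDeriv_fderiv]
    exact hD x
  have n4 := Nice.of_fderiv d4 n5
  have n3 := Nice.of_fderiv d3 n4
  have n2 := Nice.of_fderiv d2 n3
  have n1 := Nice.of_fderiv d1 n2
  have n0 := Nice.of_fderiv d0 n1
  exact ⟨d0, d1, d2, d3, d4, n0, n1, n2, n3, n4, n5⟩

lemma taylorV {V : E → E} (h : Reg V) : ∃ C : ℝ, 0 ≤ C ∧ ∃ q : ℕ, ∀ x δ : E,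
    ‖V (x + δ) - (V x + D1 V x δ + (1 / 2 : ℝ) • D2 V x δ δ + (1 / 6 : ℝ) • D3 V x δ δ δ
      + (1 / 24 : ℝ) • D4 V x δ δ δ δ)‖ ≤ C * (1 + (‖x‖ + ‖δ‖)) ^ q * ‖δ‖ ^ 5 := by
  obtain ⟨-, C, hC, q, hb⟩ := h.n5
  refine ⟨C, hC, q, fun x δ => ?_⟩
  have line (t : ℝ) : HasDerivAt (fun t : ℝ => x + t • δ) δ t := by
    simpa using ((hasDerivAt_id t).smul_const δ).const_add x
  have k0 (t : ℝ) : HasDerivAt (fun t : ℝ => V (x + t • δ)) (D1 V (x + t • δ) δ) t :=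
    (h.d0 _).hasFDerivAt.comp_hasDerivAt t (line t)
  have k1 (t : ℝ) : HasDerivAt (fun t : ℝ => D1 V (x + t • δ)) (D2 V (x + t • δ) δ) t :=
    (h.d1 _).hasFDerivAt.comp_hasDerivAt t (line t)
  have k2 (t : ℝ) : HasDerivAt (fun t : ℝ => D2 V (x + t • δ)) (D3 V (x + t • δ) δ) t :=
    (h.d2 _).hasFDerivAt.comp_hasDerivAt t (line t)
  have k3 (t : ℝ) : HasDerivAt (fun t : ℝ => D3 V (x + t • δ)) (D4 V (x + t • δ) δ) t :=
    (h.d3 _).hasFDerivAt.comp_hasDerivAt t (line t)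
  have k4 (t : ℝ) : HasDerivAt (fun t : ℝ => D4 V (x + t • δ)) (D5 V (x + t • δ) δ) t :=
    (h.d4 _).hasFDerivAt.comp_hasDerivAt t (line t)
  have ap {A B : Type _} [NormedAddCommGroup A] [NormedSpace ℝ A] [NormedAddCommGroup B]
      [NormedSpace ℝ B] {f : ℝ → (A →L[ℝ] B)} {f' : A →L[ℝ] B} {t : ℝ} (a : A)
      (hf : HasDerivAt f f' t) : HasDerivAt (fun t => f t a) (f' a) t := by
    simpa using hf.clm_apply (hasDerivAt_const t a)
  have := taylor1 (M := C * (1 + (‖x‖ + ‖δ‖)) ^ q * ‖δ‖ ^ 5)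
    (g5 := fun t => D5 V (x + t • δ) δ δ δ δ δ) (by positivity) k0
    (fun t => ap δ (k1 t)) (fun t => ap δ (ap δ (k2 t))) (fun t => ap δ (ap δ (ap δ (k3 t))))
    (fun t => ap δ (ap δ (ap δ (ap δ (k4 t))))) (fun t ht => by
      have hn : ‖x + t • δ‖ ≤ ‖x‖ + ‖δ‖ := by
        refine (norm_add_le _ _).trans ?_
        rw [norm_smul, Real.norm_eq_abs, abs_of_nonneg ht.1]
        nlinarith [norm_nonneg δ, ht.2]
      have : ‖D5 V (x + t • δ)‖ ≤ C * (1 + (‖x‖ + ‖δ‖)) ^ q := by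
        refine (hb _).trans ?_
        gcongr
      calc _ ≤ ‖D5 V (x + t • δ)‖ * ‖δ‖ * ‖δ‖ * ‖δ‖ * ‖δ‖ * ‖δ‖ := by
            refine ContinuousLinearMap.le_of_opNorm_le _ ?_ _
            refine ContinuousLinearMap.le_of_opNorm_le _ ?_ _
            refine ContinuousLinearMap.le_of_opNorm_le _ ?_ _
            refine ContinuousLinearMap.le_of_opNorm_le _ ?_ _
            exact ContinuousLinearMap.le_opNorm _ _
        _ = ‖D5 V (x + t • δ)‖ * ‖δ‖ ^ 5 := by ring
        _ ≤ _ := by gcongr)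
  simpa using this

lemma exp2 (b : E →L[ℝ] E →L[ℝ] E) (θ : ℝ) (d1 d2 d3 d4 e e1 e2 : E)
    (h2 : e2 = d3 + θ • d4) (h1 : e1 = d2 + θ • e2) (h0 : e = d1 + θ • e1) :
    b (θ • e) (θ • e) = θ ^ 2 • b d1 d1 + θ ^ 3 • (b d1 d2 + b d2 d1)
      + θ ^ 4 • (b d1 d3 + b d2 d2 + b d3 d1)
      + θ ^ 5 • (b d1 d4 + b d2 e2 + b d3 e1 + b d4 e) := by
  subst h0 h1 h2
  simp only [map_add, map_smul, ContinuousLinearMap.add_apply, ContinuousLinearMap.smul_apply]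
  module

lemma exp3 (b : E →L[ℝ] E →L[ℝ] E →L[ℝ] E) (θ : ℝ) (d1 d2 e e1 e2 : E)
    (h1 : e1 = d2 + θ • e2) (h0 : e = d1 + θ • e1) :
    b (θ • e) (θ • e) (θ • e) = θ ^ 3 • b d1 d1 d1
      + θ ^ 4 • (b d1 d1 d2 + b d1 d2 d1 + b d2 d1 d1)
      + θ ^ 5 • (b e2 e e + b d1 e2 e + b d1 d1 e2 + b d1 d2 e1 + b d2 e1 e + b d2 d1 e1) := by
  subst h0 h1
  simp only [map_add, map_smul, ContinuousLinearMap.add_apply, ContinuousLinearMap.smul_apply]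
  module

lemma exp4 (b : E →L[ℝ] E →L[ℝ] E →L[ℝ] E →L[ℝ] E) (θ : ℝ) (d1 e e1 : E)
    (h0 : e = d1 + θ • e1) :
    b (θ • e) (θ • e) (θ • e) (θ • e) = θ ^ 4 • b d1 d1 d1 d1
      + θ ^ 5 • (b e1 e e e + b d1 e1 e e + b d1 d1 e1 e + b d1 d1 d1 e1) := by
  subst h0
  simp only [map_add, map_smul, ContinuousLinearMap.add_apply, ContinuousLinearMap.smul_apply]
  module

/-- coefficients of the expansion of `V (x + θ d₁ + θ² d₂ + θ³ d₃ + θ⁴ d₄)` -/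
noncomputable def c1 (V : E → E) (d1 : E → E) (x : E) : E := D1 V x (d1 x)
noncomputable def c2 (V : E → E) (d1 d2 : E → E) (x : E) : E :=
  D1 V x (d2 x) + (1 / 2 : ℝ) • D2 V x (d1 x) (d1 x)
noncomputable def c3 (V : E → E) (d1 d2 d3 : E → E) (x : E) : E :=
  D1 V x (d3 x) + (1 / 2 : ℝ) • (D2 V x (d1 x) (d2 x) + D2 V x (d2 x) (d1 x))
    + (1 / 6 : ℝ) • D3 V x (d1 x) (d1 x) (d1 x)
noncomputable def c4 (V : E → E) (d1 d2 d3 d4 : E → E) (x : E) : E :=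
  D1 V x (d4 x)
    + (1 / 2 : ℝ) • (D2 V x (d1 x) (d3 x) + D2 V x (d2 x) (d2 x) + D2 V x (d3 x) (d1 x))
    + (1 / 6 : ℝ) • (D3 V x (d1 x) (d1 x) (d2 x) + D3 V x (d1 x) (d2 x) (d1 x)
      + D3 V x (d2 x) (d1 x) (d1 x))
    + (1 / 24 : ℝ) • D4 V x (d1 x) (d1 x) (d1 x) (d1 x)

lemma nc1 {V : E → E} (h : Reg V) {d1 : E → E} (h1 : Nice d1) :
    Nice (c1 V d1) := h.n1.app h1

lemma nc2 {V : E → E} (h : Reg V) {d1 d2 : E → E} (h1 : Nice d1) (h2 : Nice d2) :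
    Nice (c2 V d1 d2) := (h.n1.app h2).add (((h.n2.app h1).app h1).smul _)

lemma nc3 {V : E → E} (h : Reg V) {d1 d2 d3 : E → E} (h1 : Nice d1) (h2 : Nice d2) (h3 : Nice d3) :
    Nice (c3 V d1 d2 d3) :=
  ((h.n1.app h3).add ((((h.n2.app h1).app h2).add ((h.n2.app h2).app h1)).smul _)).add
    ((((h.n3.app h1).app h1).app h1).smul _)

lemma nc4 {V : E → E} (h : Reg V) {d1 d2 d3 d4 : E → E} (h1 : Nice d1) (h2 : Nice d2) (h3 : Nice d3) (h4 : Nice d4) :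
    Nice (c4 V d1 d2 d3 d4) :=
  (((h.n1.app h4).add (((((h.n2.app h1).app h3).add ((h.n2.app h2).app h2)).add
      ((h.n2.app h3).app h1)).smul _)).add
    ((((((h.n3.app h1).app h1).app h2).add (((h.n3.app h1).app h2).app h1)).add
      (((h.n3.app h2).app h1).app h1)).smul _)).add
    (((((h.n4.app h1).app h1).app h1).app h1).smul _)

lemma compose {V : E → E} (h : Reg V) {d1 d2 d3 d4 : E → E} (h1 : Nice d1) (h2 : Nice d2) (h3 : Nice d3) (h4 : Nice d4)
    {T : ℝ} (hT : 0 ≤ T) {L : NNReal} (hL : LipschitzWith L V) {ρ : ℝ → E → E}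
    (hρ : Big T 5 ρ) :
    Big T 5 (fun θ x => V (x + (θ • d1 x + θ ^ 2 • d2 x + θ ^ 3 • d3 x + θ ^ 4 • d4 x) + ρ θ x)
      - (V x + θ • c1 V d1 x + θ ^ 2 • c2 V d1 d2 x + θ ^ 3 • c3 V d1 d2 d3 x
        + θ ^ 4 • c4 V d1 d2 d3 d4 x)) := by
  set e2 : ℝ → E → E := fun θ x => d3 x + θ • d4 x with he2
  set e1 : ℝ → E → E := fun θ x => d2 x + θ • e2 θ x with he1
  set e : ℝ → E → E := fun θ x => d1 x + θ • e1 θ x with he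
  have B1 : Big T 0 (fun _ x => d1 x) := h1.big
  have B2 : Big T 0 (fun _ x => d2 x) := h2.big
  have B3 : Big T 0 (fun _ x => d3 x) := h3.big
  have B4 : Big T 0 (fun _ x => d4 x) := h4.big
  have E2 : Big T 0 e2 := B3.add (B4.tsmul hT)
  have E1 : Big T 0 e1 := B2.add (E2.tsmul hT)
  have E0 : Big T 0 e := B1.add (E1.tsmul hT)
  have N2 : Big T 0 (fun _ x => D2 V x) := h.n2.big
  have N3 : Big T 0 (fun _ x => D3 V x) := h.n3.big
  have N4 : Big T 0 (fun _ x => D4 V x) := h.n4.big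
  -- Lipschitz part
  have R1 : Big T 5 (fun θ x => V (x + θ • e θ x + ρ θ x) - V (x + θ • e θ x)) := by
    obtain ⟨C, hC, q, hb⟩ := hρ
    refine ⟨L * C, by positivity, q, fun θ hθ x => ?_⟩
    have := hL.norm_sub_le (x + θ • e θ x + ρ θ x) (x + θ • e θ x)
    rw [add_sub_cancel_left] at this
    refine this.trans ?_
    have := mul_le_mul_of_nonneg_left (hb θ hθ x) L.2
    calc _ ≤ _ := this
      _ = _ := by simp only [NNReal.val_eq_coe]; ring
  -- Taylor part
  have R2 : Big T 5 (fun θ x => V (x + θ • e θ x) - (V x + D1 V x (θ • e θ x)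
      + (1 / 2 : ℝ) • D2 V x (θ • e θ x) (θ • e θ x)
      + (1 / 6 : ℝ) • D3 V x (θ • e θ x) (θ • e θ x) (θ • e θ x)
      + (1 / 24 : ℝ) • D4 V x (θ • e θ x) (θ • e θ x) (θ • e θ x) (θ • e θ x))) := by
    obtain ⟨C, hC, q, hb⟩ := taylorV h
    obtain ⟨C', hC', q', hb'⟩ := E0
    refine ⟨C * (1 + T * C') ^ q * C' ^ 5, by positivity, (q' + 1) * q + q' * 5,
      fun θ hθ x => (hb x _).trans ?_⟩
    have hx : (1 : ℝ) ≤ 1 + ‖x‖ := by linarith [norm_nonneg x]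
    have b := hb' θ hθ x
    simp only [pow_zero, mul_one] at b
    have a1 : ‖θ • e θ x‖ ≤ |θ| * (C' * (1 + ‖x‖) ^ q') := by
      rw [norm_smul, Real.norm_eq_abs]
      gcongr
    have a2 : 1 + (‖x‖ + ‖θ • e θ x‖) ≤ (1 + T * C') * (1 + ‖x‖) ^ (q' + 1) := by
      have : ‖θ • e θ x‖ ≤ T * (C' * (1 + ‖x‖) ^ (q' + 1)) := by
        refine a1.trans ?_
        gcongr <;> first | assumption | simp
      have : 1 + ‖x‖ ≤ (1 + ‖x‖) ^ (q' + 1) := le_self_pow₀ hx (by simp)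
      linarith
    calc _ ≤ C * ((1 + T * C') * (1 + ‖x‖) ^ (q' + 1)) ^ q
          * (|θ| * (C' * (1 + ‖x‖) ^ q')) ^ 5 := by gcongr
      _ = _ := by
        rw [mul_pow, mul_pow, mul_pow, ← pow_mul, ← pow_mul, pow_add (1 + ‖x‖) ((q' + 1) * q)]
        ring
  have R3 := Big.pow_smul 5 ((((((N2.app B1).app B4).add ((N2.app B2).app E2)).add
    ((N2.app B3).app E1)).add ((N2.app B4).app E0)).smul (1 / 2))
  have R4 := Big.pow_smul 5 ((((((((N3.app E2).app E0).app E0).add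
    (((N3.app B1).app E2).app E0)).add (((N3.app B1).app B1).app E2)).add
    (((N3.app B1).app B2).app E1)).add (((N3.app B2).app E1).app E0)).add
    (((N3.app B2).app B1).app E1) |>.smul (1 / 6))
  have R5 := Big.pow_smul 5 (((((((N4.app E1).app E0).app E0).app E0).add
    ((((N4.app B1).app E1).app E0).app E0)).add ((((N4.app B1).app B1).app E1).app E0)).add
    ((((N4.app B1).app B1).app B1).app E1) |>.smul (1 / 24))
  have R := (((R1.add R2).add R3).add R4).add R5
  convert R using 3 with θ x
  rw [exp2 (D2 V x) θ (d1 x) (d2 x) (d3 x) (d4 x) (e θ x) (e1 θ x) (e2 θ x) rfl rfl rfl,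
    exp3 (D3 V x) θ (d1 x) (d2 x) (e θ x) (e1 θ x) (e2 θ x) rfl rfl,
    exp4 (D4 V x) θ (d1 x) (e θ x) (e1 θ x) rfl]
  have hδ : θ • e θ x = θ • d1 x + θ ^ 2 • d2 x + θ ^ 3 • d3 x + θ ^ 4 • d4 x := by
    simp only [he, he1, he2]
    module
  rw [hδ]
  simp only [c1, c2, c3, c4, map_add, map_smul]
  module

/-- Gronwall, two-sided -/
lemma gron {u u' : ℝ → E} {K ε θ : ℝ} (hK : 0 ≤ K) (hε : 0 ≤ ε) (h0 : u 0 = 0)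
    (hd : ∀ t, HasDerivAt u (u' t) t) (hb : ∀ t, |t| ≤ |θ| → ‖u' t‖ ≤ K * ‖u t‖ + ε) :
    ‖u θ‖ ≤ ε * |θ| * Real.exp (K * |θ|) := by
  have key : ∀ (w w' : ℝ → E) (a : ℝ), 0 ≤ a → w 0 = 0 → (∀ t, HasDerivAt w (w' t) t) →
      (∀ t, |t| ≤ a → ‖w' t‖ ≤ K * ‖w t‖ + ε) → ‖w a‖ ≤ ε * a * Real.exp (K * a) := by
    intro w w' a ha hw0 hw hwb
    have := norm_le_gronwallBound_of_norm_deriv_right_le (f := w) (f' := w') (δ := 0) (K := K)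
      (ε := ε) (a := 0) (b := a) (fun t _ => (hw t).continuousAt.continuousWithinAt)
      (fun t _ => (hw t).hasDerivWithinAt) (by simp [hw0])
      (fun t ht => hwb t (by rw [abs_of_nonneg ht.1]; exact ht.2.le)) a ⟨ha, le_rfl⟩
    refine this.trans ?_
    rw [sub_zero]
    rcases hK.eq_or_lt with h | h
    · subst h
      simp [gronwallBound_K0]
    · rw [gronwallBound_of_K_ne_0 h.ne']
      have e1 : Real.exp (K * a) - 1 ≤ K * a * Real.exp (K * a) := by
        have h2 := Real.add_one_le_exp (-(K * a))
        have h3 := Real.exp_pos (K * a)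
        have h4 : Real.exp (-(K * a)) * Real.exp (K * a) = 1 := by
          rw [← Real.exp_add]; simp
        nlinarith
      calc _ = ε / K * (Real.exp (K * a) - 1) := by ring
        _ ≤ ε / K * (K * a * Real.exp (K * a)) := by gcongr
        _ = _ := by field_simp
  rcases le_total 0 θ with h | h
  · rw [abs_of_nonneg h] at hb ⊢
    exact key u u' θ h h0 hd hb
  · rw [abs_of_nonpos h] at hb ⊢
    have := key (fun t => u (-t)) (fun t => -u' (-t)) (-θ) (by linarith) (by simpa using h0)
      (fun t => by
        have := (hd (-t)).scomp t (hasDerivAt_neg t)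
        simpa [Function.comp_def] using this)
      (fun t ht => by simpa using hb (-t) (by simpa using ht))
    simpa using this

lemma main {T : ℝ} (hT : 0 ≤ T) {V : E → E} (h : Reg V) {L : NNReal} (hL : LipschitzWith L V)
    {φ : ℝ → E → E} (hφ0 : ∀ x, φ 0 x = x)
    (hφ : ∀ (x : E) (t : ℝ), HasDerivAt (fun s => φ s x) (V (φ t x)) t) :
    ∃ hV : E → E, Nice hV ∧ Big T 6 (fun θ x => φ θ x - (x + (θ / 6) • (V x
    + (2 : ℝ) • V (x + (θ / 2) • V x)
    + (2 : ℝ) • V (x + (θ / 2) • V (x + (θ / 2) • V x))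
    + V (x + θ • V (x + (θ / 2) • V (x + (θ / 2) • V x))))) - θ ^ 5 • hV x) := by
  have n0 := h.n0
  have nz : Nice (fun _ : E => (0 : E)) := ⟨continuous_const, 0, le_rfl, 0, by simp⟩
  have bz : Big T 5 (fun (_ : ℝ) (_ : E) => (0 : E)) := ⟨0, le_rfl, 0, by simp⟩
  -- exact solution
  obtain ⟨p2, hp2⟩ : ∃ p : E → E, p = fun x => (1 / 2 : ℝ) • c1 V V x := ⟨_, rfl⟩
  have np2 : Nice p2 := hp2 ▸ (nc1 h n0).smul _
  obtain ⟨p3, hp3⟩ : ∃ p : E → E, p = fun x => (1 / 3 : ℝ) • c2 V V p2 x := ⟨_, rfl⟩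
  have np3 : Nice p3 := hp3 ▸ (nc2 h n0 np2).smul _
  obtain ⟨p4, hp4⟩ : ∃ p : E → E, p = fun x => (1 / 4 : ℝ) • c3 V V p2 p3 x := ⟨_, rfl⟩
  have np4 : Nice p4 := hp4 ▸ (nc3 h n0 np2 np3).smul _
  obtain ⟨p5, hp5⟩ : ∃ p : E → E, p = fun x => (1 / 5 : ℝ) • c4 V V p2 p3 p4 x := ⟨_, rfl⟩
  have np5 : Nice p5 := hp5 ▸ (nc4 h n0 np2 np3 np4).smul _
  have S0 : Big T 6 (fun θ x => φ θ x - (x + (θ • V x + θ ^ 2 • p2 x + θ ^ 3 • p3 x + θ ^ 4 • p4 x)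
      + θ ^ 5 • p5 x)) := by
    have := compose h n0 np2 np3 np4 hT hL (Big.pow_smul 5 (np5.big (T := T)))
    obtain ⟨C, hC, q, hb⟩ := this
    refine ⟨C * Real.exp (L * T), by positivity, q, fun θ hθ x => ?_⟩
    have q1 (t : ℝ) : HasDerivAt (fun t : ℝ => t) 1 t := hasDerivAt_id t
    have qk (k : ℕ) (t : ℝ) : HasDerivAt (fun t : ℝ => t ^ k) (k * t ^ (k - 1)) t :=
      hasDerivAt_pow k t
    have dP (t : ℝ) := (((((((q1 t).smul_const (V x)).add ((qk 2 t).smul_const (p2 x))).add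
      ((qk 3 t).smul_const (p3 x))).add ((qk 4 t).smul_const (p4 x))).const_add x).add
      ((qk 5 t).smul_const (p5 x)))
    have hg := gron (K := L) (ε := C * (1 + ‖x‖) ^ q * |θ| ^ 5) (θ := θ) L.2 (by positivity)
      (u := fun θ => φ θ x - (x + (θ • V x + θ ^ 2 • p2 x + θ ^ 3 • p3 x + θ ^ 4 • p4 x)
      + θ ^ 5 • p5 x)) (by simp [hφ0]) (fun t => (hφ x t).sub (dP t)) (by
        intro t ht
        have b1 := hb t (ht.trans hθ) x
        have b2 := hL.norm_sub_le (φ t x)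
          (x + (t • V x + t ^ 2 • p2 x + t ^ 3 • p3 x + t ^ 4 • p4 x) + t ^ 5 • p5 x)
        have b3 : C * (1 + ‖x‖) ^ q * |t| ^ 5 ≤ C * (1 + ‖x‖) ^ q * |θ| ^ 5 := by gcongr
        refine le_trans ?_ (add_le_add b2 (b1.trans b3))
        refine le_trans (le_of_eq ?_) (norm_add_le _ _)
        congr 1
        have e2 : c1 V V x = (2 : ℝ) • p2 x := by rw [hp2]; module
        have e3 : c2 V V p2 x = (3 : ℝ) • p3 x := by rw [hp3]; module
        have e4 : c3 V V p2 p3 x = (4 : ℝ) • p4 x := by rw [hp4]; module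
        have e5 : c4 V V p2 p3 p4 x = (5 : ℝ) • p5 x := by rw [hp5]; module
        simp only [e2, e3, e4, e5]
        push_cast
        module)
    refine hg.trans ?_
    have : Real.exp (L * |θ|) ≤ Real.exp (L * T) := by gcongr
    calc _ ≤ C * (1 + ‖x‖) ^ q * |θ| ^ 5 * |θ| * Real.exp (L * T) := by gcongr
      _ = _ := by ring
  -- stages; `stage d` is the general step
  have stage : ∀ (a : ℝ) (k : ℝ → E → E) (a0 a1 a2 a3 a4 : E → E), Nice a0 → Nice a1 → Nice a2 →
      Nice a3 → Nice a4 → Big T 5 (fun θ x => k θ x - (a0 x + θ • a1 x + θ ^ 2 • a2 x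
        + θ ^ 3 • a3 x + θ ^ 4 • a4 x)) → ∃ m4 : E → E, Nice m4 ∧
      Big T 5 (fun θ x => V (x + (a * θ) • k θ x) - (V x + θ • c1 V (fun x => a • a0 x) x
        + θ ^ 2 • c2 V (fun x => a • a0 x) (fun x => a • a1 x) x
        + θ ^ 3 • c3 V (fun x => a • a0 x) (fun x => a • a1 x) (fun x => a • a2 x) x
        + θ ^ 4 • m4 x)) := by
    intro a k a0 a1 a2 a3 a4 g0 g1 g2 g3 g4 hk
    refine ⟨_, nc4 h (g0.smul a) (g1.smul a) (g2.smul a) (g3.smul a), ?_⟩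
    have ρ1 : Big T 5 (fun θ x => θ • (k θ x - (a0 x + θ • a1 x + θ ^ 2 • a2 x
        + θ ^ 3 • a3 x + θ ^ 4 • a4 x))) := by
      simpa using Big.weaken (k := 1) hT (Big.pow_smul 1 hk)
    have ρ := (ρ1.add (Big.pow_smul 5 (g4.big (T := T)))).smul a
    have := compose h (g0.smul a) (g1.smul a) (g2.smul a) (g3.smul a) hT hL ρ
    convert this using 5 with θ x
    module
  obtain ⟨m2, nm2, S2⟩ := stage (1 / 2) (fun _ x => V x) V (fun _ => 0) (fun _ => 0) (fun _ => 0)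
    (fun _ => 0) n0 nz nz nz nz (by simpa using bz)
  have w1 := nc1 h (n0.smul (1 / 2))
  have w2 := nc2 h (n0.smul (1 / 2)) (nz.smul (1 / 2))
  have w3 := nc3 h (n0.smul (1 / 2)) (nz.smul (1 / 2)) (nz.smul (1 / 2))
  obtain ⟨m3, nm3, S3⟩ := stage (1 / 2) _ V _ _ _ _ n0 w1 w2 w3 nm2 S2
  have v1 := w1
  have v2 := nc2 h (n0.smul (1 / 2)) (w1.smul (1 / 2))
  have v3 := nc3 h (n0.smul (1 / 2)) (w1.smul (1 / 2)) (w2.smul (1 / 2))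
  obtain ⟨m4, nm4, S4⟩ := stage 1 _ V _ _ _ _ n0 v1 v2 v3 nm3 S3
  refine ⟨fun x => p5 x + (-1 / 6 : ℝ) • ((2 : ℝ) • m2 x + (2 : ℝ) • m3 x + m4 x),
    np5.add (((nm2.smul 2).add (nm3.smul 2)).add nm4 |>.smul _), ?_⟩
  have S := S0.add ((Big.pow_smul 1 (((S2.smul 2).add (S3.smul 2)).add S4)).smul (-1 / 6))
  convert S using 3 with θ x
  have t1 : (1 / 2 * θ) = θ / 2 := by ring
  rw [t1, one_mul]
  simp only [hp2, hp3, hp4, c1, c2, c3, map_add, map_smul, map_zero, smul_zero,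
    ContinuousLinearMap.add_apply, ContinuousLinearMap.smul_apply, ContinuousLinearMap.zero_apply]
  module

end RK4Aux

/-- pathwise fifth-order expansion of the local error of the
fourth-order Runge–Kutta scheme. -/
theorem rk4_local_error_expansion {n : ℕ} (T : ℝ) (hT : 0 < T) (V : Vec n → Vec n)
    (hLip : ∃ L : NNReal, LipschitzWith L V)
    (hC5 : ContDiff ℝ 5 V)
    (hD5 : PolyLocLip (iteratedFDeriv ℝ 5 V))
    (φ : ℝ → Vec n → Vec n) (hφ : IsFlow V φ) :
    ∃ hV : Vec n → Vec n, Continuous hV ∧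
      (∃ K : ℝ, 0 ≤ K ∧ ∃ r : ℕ, ∀ x, ‖hV x‖ ≤ K * (1 + ‖x‖ ^ r)) ∧
      ∃ C : ℝ, 0 < C ∧ ∃ q : ℕ, 1 ≤ q ∧
        ∀ θ ∈ Set.Icc (-T) T, ∀ x : Vec n,
          ‖φ θ x - rk4 V θ x - θ ^ 5 • hV x‖ ≤ C * (1 + ‖x‖ ^ q) * θ ^ 6 := by
  obtain ⟨L, hL⟩ := hLip
  obtain ⟨K, hK, r, hD⟩ := hD5
  have hreg : RK4Aux.Reg V := by
    refine RK4Aux.reg_of hC5 (K := ‖iteratedFDeriv ℝ 5 V 0‖ + 3 * K) (r := r + 1)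
      (by positivity) (fun x => ?_)
    have h1 := hD x 0
    have hx : (1 : ℝ) ≤ 1 + ‖x‖ := by linarith [norm_nonneg x]
    have h2 : ‖x‖ ^ r ≤ (1 + ‖x‖) ^ r := by gcongr; linarith
    have h3 : ‖(0 : Vec n)‖ ^ r ≤ (1 + ‖x‖) ^ r := by gcongr; simp; linarith
    have h4 : (1 : ℝ) ≤ (1 + ‖x‖) ^ r := one_le_pow₀ hx
    have h5 : (1 : ℝ) ≤ (1 + ‖x‖) ^ (r + 1) := one_le_pow₀ hx
    have h6 : ‖iteratedFDeriv ℝ 5 V x‖ ≤ ‖iteratedFDeriv ℝ 5 V 0‖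
        + ‖iteratedFDeriv ℝ 5 V x - iteratedFDeriv ℝ 5 V 0‖ := by
      simpa using norm_add_le (iteratedFDeriv ℝ 5 V 0)
        (iteratedFDeriv ℝ 5 V x - iteratedFDeriv ℝ 5 V 0)
    have h7 : K * (1 + ‖x‖ ^ r + ‖(0 : Vec n)‖ ^ r) * ‖x - 0‖
        ≤ K * (3 * (1 + ‖x‖) ^ r) * (1 + ‖x‖) := by
      rw [sub_zero]
      gcongr <;> linarith
    have h8 : K * (3 * (1 + ‖x‖) ^ r) * (1 + ‖x‖) = 3 * K * (1 + ‖x‖) ^ (r + 1) := by ring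
    have h9 := mul_le_mul_of_nonneg_left h5 (norm_nonneg (iteratedFDeriv ℝ 5 V 0))
    linarith
  obtain ⟨hV, ⟨hc, K', hK', r', hg⟩, C, hC, q, hb⟩ := RK4Aux.main hT.le hreg hL hφ.1 hφ.2
  have conv (q : ℕ) (x : Vec n) : (1 + ‖x‖) ^ q ≤ 2 ^ (q - 1) * (1 + ‖x‖ ^ q) := by
    simpa using add_pow_le (zero_le_one' ℝ) (norm_nonneg x) q
  refine ⟨hV, hc, ⟨K' * 2 ^ (r' - 1), by positivity, r', fun x => ?_⟩,
    (C + 1) * 2 ^ q, by positivity, q + 1, by simp, fun θ hθ x => ?_⟩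
  · refine (hg x).trans ?_
    rw [mul_assoc]
    exact mul_le_mul_of_nonneg_left (conv r' x) hK'
  · refine (hb θ (abs_le.2 hθ) x).trans ?_
    rw [Even.pow_abs (by decide)]
    have h1 : (1 + ‖x‖) ^ q ≤ (1 + ‖x‖) ^ (q + 1) :=
      pow_le_pow_right₀ (by linarith [norm_nonneg x]) (by simp)
    have h2 := h1.trans (conv (q + 1) x)
    simp only [Nat.add_sub_cancel] at h2
    have h6 : 0 ≤ θ ^ 6 := Even.pow_nonneg (by decide) θ
    refine mul_le_mul_of_nonneg_right ?_ h6
    rw [mul_assoc]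
    exact mul_le_mul (by linarith) h2 (by positivity) (by positivity)
end
end
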